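/- Conventions. Let $X'$ be a metric space. A geodesic is an isometric embedding of a closed interval of $\mathbb{R}$ into $X'$; a geodesic ray based at $x$ is an isometric embedding $\gamma:[0,\infty)\to X'$ with $\gamma(0)=x$. For $Q\ge 1$, a $Q$-quasi-geodesic is a continuous map $\gamma: I\to X'$ from an interval $I\subseteq\mathbb{R}$ with $\frac{|t-s|}{Q}-Q\le d(\gamma(s),\gamma(t))\le Q|t-s|+Q$ for all $s,t\in I$. A Morse gauge is a non-decreasing continuous function $M:[1,\infty)\to[0,\infty)$; a quasi-geodesic $\gamma$ is $M$-Morse if for every $Q\ge1$ every $Q$-quasi-geodesic with endpoints $\gamma(s)$ and $\gamma(t)$ lies in the closed $M(Q)$-neighbourhood of $\gamma[s,t]$. The space $X'$ has the Morse local-to-global property if for every $Q\ge 1$ and every Morse gauge $M$ there are $L>0$, $Q'\ge1$ and a Morse gauge $M'$ such that every path $p:I\to X'$, all of whose subpaths $p[s,t]$ with $|t-s|\le L$ are $M$-Morse $Q$-quasi-geodesics, is an $M'$-Morse $Q'$-quasi-geodesic. The space $X'$ is Gromov hyperbolic if for some $\delta\ge0$ every side of every geodesic triangle lies in the $\delta$-neighbourhood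 of the union of the other two sides. A geodesic (ray) $\gamma$ is strongly contracting if there is a constant $C$ such that for every $x\in X'$ the closest-point projection to $\gamma$ of the ball of radius $d(x,\gamma)$ around $x$ has diameter at most $C$. An action by isometries is geometric if it is proper and cocompact. Statement. Let $G$ be a finitely generated group acting geometrically on a proper geodesic metric space $X'$ with basepoint $x_0'$, such that $X'$ is not Gromov hyperbolic, has the Morse local-to-global property, and contains a strongly contracting geodesic ray based at $x_0'$. Let $N$ be a Morse gauge. Then there exists a sequence $(\eta_i)_{i\in\mathbb{N}}$ of geodesic segments, each from $x_0'$ to a point of the orbit $G\cdot x_0'$, such that for every geodesic segment $\lambda$ from $x_0'$ to a point of $G\cdot x_0'$ there exist indices $i_0,i_1\in\mathbb{N}$ with the properties (i) and (ii) below. Here, for a geodesic segment $\eta$ from $x_0'$ to a point of $G\cdot x_0'$ and any choice of $g\in G$ such that $g\cdot x_0'$ is the endpoint of $\eta$, we write $\eta\ast_T\lambda$ for the concatenation of $\eta$ with the translate $g\cdot\lambda$; the statements hold for all such choices of $g$ (made independently for different $\eta_i$). (i) For all $i\ne j$ with $i,j\notin\{i_0,i_1\}$: if $x$ and $y$ are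 the endpoints of $\eta_i\ast_T\lambda$ and $\eta_j\ast_T\lambda$ respectively, then no geodesic from $x$ to $y$ is $N$-Morse. (ii) For all $i\notin\{i_0,i_1\}$: if $x'$ and $y'$ are the endpoints of $\eta_i\ast_T\lambda$ and of $\lambda$ respectively, then no geodesic from $x'$ to $y'$ is $N$-Morse. -/

import Mathlib

namespace MorseLTG

/-- A Morse gauge: a non-decreasing continuous function `[1, ∞) → [0, ∞)`
(the values of `M` outside `[1, ∞)` are never used). -/
def IsMorseGauge (M : ℝ → ℝ) : Prop :=
  MonotoneOn M (Set.Ici 1) ∧ ContinuousOn M (Set.Ici 1) ∧ ∀ t : ℝ, 1 ≤ t → 0 ≤ M t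

section Space

variable {X : Type*} [MetricSpace X]

/-- `γ` restricted to `I ⊆ ℝ` is a (continuous) `Q`-quasi-geodesic. -/
def QGeoOn (Q : ℝ) (I : Set ℝ) (γ : ℝ → X) : Prop :=
  ContinuousOn γ I ∧ ∀ s ∈ I, ∀ t ∈ I,
    |t - s| / Q - Q ≤ dist (γ s) (γ t) ∧ dist (γ s) (γ t) ≤ Q * |t - s| + Q

/-- `γ` restricted to `I` is `M`-Morse: every `Q`-quasi-geodesic `lam : [a, b] → X` from `γ s` to
`γ t` stays in the closed `M Q`-neighbourhood of `γ[s, t]`. -/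
def MorseOn (M : ℝ → ℝ) (I : Set ℝ) (γ : ℝ → X) : Prop :=
  ∀ Q : ℝ, 1 ≤ Q → ∀ s ∈ I, ∀ t ∈ I, s ≤ t →
    ∀ (lam : ℝ → X) (a b : ℝ), a ≤ b → QGeoOn Q (Set.Icc a b) lam →
      lam a = γ s → lam b = γ t →
      ∀ u ∈ Set.Icc a b, ∃ v ∈ Set.Icc s t, dist (lam u) (γ v) ≤ M Q

/-- `γ` restricted to `I` is a geodesic (an isometric embedding). -/
def GeodesicOn (I : Set ℝ) (γ : ℝ → X) : Prop :=
  ∀ s ∈ I, ∀ t ∈ I, dist (γ s) (γ t) = |t - s|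

/-- `γ : [0, T] → X` is a geodesic segment from `x` to `y`. -/
def IsGeodesicSegment (γ : ℝ → X) (T : ℝ) (x y : X) : Prop :=
  0 ≤ T ∧ γ 0 = x ∧ γ T = y ∧ GeodesicOn (Set.Icc 0 T) γ

/-- `γ : [0, ∞) → X` is a geodesic ray based at `x₀`. -/
def IsGeodesicRay (γ : ℝ → X) (x₀ : X) : Prop :=
  γ 0 = x₀ ∧ GeodesicOn (Set.Ici 0) γ

/-- `p : I → X` is `L`-locally an `M`-Morse `Q`-quasi-geodesic. -/
def LocMorseQGeoOn (Q : ℝ) (M : ℝ → ℝ) (L : ℝ) (I : Set ℝ) (p : ℝ → X) : Prop :=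
  ∀ s ∈ I, ∀ t ∈ I, s ≤ t → t - s ≤ L →
    QGeoOn Q (Set.Icc s t) p ∧ MorseOn M (Set.Icc s t) p

/-- The set of closest-point projections of `x` to `A`. -/
def projSet (A : Set X) (x : X) : Set X :=
  {y ∈ A | ∀ z ∈ A, dist x y ≤ dist x z}

/-- `A` is `C`-contracting: for every `x`, the projection to `A` of the ball of radius `d(x, A)`
around `x` has diameter at most `C`. -/
def ContractingSet (C : ℝ) (A : Set X) : Prop :=
  ∀ x : X, ∀ y ∈ Metric.ball x (Metric.infDist x A), ∀ z ∈ Metric.ball x (Metric.infDist x A),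
    ∀ p ∈ projSet A y, ∀ q ∈ projSet A z, dist p q ≤ C

end Space

/-- `X` is a geodesic metric space. -/
def GeodesicSpace (X : Type*) [MetricSpace X] : Prop :=
  ∀ x y : X, ∃ (γ : ℝ → X) (T : ℝ), IsGeodesicSegment γ T x y

/-- The Morse local-to-global property. Paths are defined on arbitrary intervals `I ⊆ ℝ`. -/
def MLTG (X : Type*) [MetricSpace X] : Prop :=
  ∀ Q : ℝ, 1 ≤ Q → ∀ M : ℝ → ℝ, IsMorseGauge M →
    ∃ (L Q' : ℝ) (M' : ℝ → ℝ), 0 < L ∧ 1 ≤ Q' ∧ IsMorseGauge M' ∧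
      ∀ I : Set ℝ, I.OrdConnected → ∀ p : ℝ → X,
        LocMorseQGeoOn Q M L I p → QGeoOn Q' I p ∧ MorseOn M' I p

/-- Gromov hyperbolicity via thin geodesic triangles. (The condition is imposed on one side of
every cyclically labelled triangle, hence on all three sides.) -/
def GromovHyperbolic (X : Type*) [MetricSpace X] : Prop :=
  ∃ δ : ℝ, 0 ≤ δ ∧
    ∀ (x y z : X) (γ₁ γ₂ γ₃ : ℝ → X) (T₁ T₂ T₃ : ℝ),
      IsGeodesicSegment γ₁ T₁ x y → IsGeodesicSegment γ₂ T₂ y z → IsGeodesicSegment γ₃ T₃ z x →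
      ∀ s ∈ Set.Icc 0 T₁,
        ∃ p ∈ γ₂ '' Set.Icc 0 T₂ ∪ γ₃ '' Set.Icc 0 T₃, dist (γ₁ s) p ≤ δ

/-- The action of `G` on `X` is geometric: by isometries, proper and cocompact. -/
def IsGeometricAction (G X : Type*) [Group G] [MetricSpace X] [MulAction G X] : Prop :=
  IsIsometricSMul G X ∧ ProperlyDiscontinuousSMul G X ∧
    ∃ K : Set X, IsCompact K ∧ ∀ y : X, ∃ g : G, ∃ k ∈ K, g • k = y

/-- The translated concatenation `η ∗_T lam`: the path `η : [0, T] → X`, which ends at `g • x₀`,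
followed by the translate by `g` of a path `lam : [0, T'] → X` starting at `x₀`.
It is a path on `[0, T + T']`. -/
noncomputable def transConcat {G X : Type*} [Group G] [MulAction G X]
    (g : G) (η : ℝ → X) (T : ℝ) (lam : ℝ → X) : ℝ → X :=
  fun t => if t ≤ T then η t else g • lam (t - T)

end MorseLTG

/-!
A contracting ray has the bottleneck property: a geodesic between two points whose projections to
the ray are far apart passes near both projections. By properness and cocompactness some element
`w` of `G` translates a long stretch of the ray along itself, and the orbit of `⟨w⟩` inherits the
bottleneck property.

Since `X` is not hyperbolic, `G` is not virtually cyclic around this axis, so some translate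
`e • axis` is transverse to it. Moreover, for any `D` there is a far away orbit point `b • x₀` such
that no `N`-Morse geodesic passes within `D` of both `x₀` and `b • x₀`: otherwise all geodesic
triangles would be thin. Geodesics starting behind a word of the form `wⁿ u⁻¹ v wⁿ`, where
`u⁻¹ v` contains `b` between long powers of `w`, are forced through translates of the axis and
hence along a translate of this bad bridge, unless one of their endpoints projects to the axis
near `w^{±n} x₀`. When the distances `d(x₀, wⁿ x₀)` of the chosen exponents are widely separated,
the projection of a given point is close to at most one of them.
-/

namespace MorseLTG

open Set Metric Filter
open scoped Pointwise

/-! ### Geodesics and closest-point projections -/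

section Geodesics

variable {X : Type*} [MetricSpace X] {γ α : ℝ → X} {I J : Set ℝ} {A B : Set X} {S T s t u : ℝ}
  {x y z p q r : X}

lemma GeodesicOn.mono (h : GeodesicOn I γ) (hJ : J ⊆ I) : GeodesicOn J γ :=
  fun s hs t ht => h s (hJ hs) t (hJ ht)

lemma GeodesicOn.isometry_domRestrict (h : GeodesicOn I γ) : Isometry (I.domRestrict γ) :=
  Isometry.of_dist_eq fun s t => by
    rw [domRestrict_apply, domRestrict_apply, h s s.2 t t.2, Subtype.dist_eq, Real.dist_eq,
      abs_sub_comm]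

lemma GeodesicOn.continuousOn (h : GeodesicOn I γ) : ContinuousOn γ I :=
  continuousOn_iff_continuous_domRestrict.2 h.isometry_domRestrict.continuous

lemma GeodesicOn.isClosed_image (h : GeodesicOn I γ) (hI : IsClosed I) : IsClosed (γ '' I) := by
  have := hI.completeSpace_coe
  simpa only [range_domRestrict] using h.isometry_domRestrict.isClosedEmbedding.isClosed_range

lemma GeodesicOn.dist_add_dist (h : GeodesicOn I γ) (hs : s ∈ I) (hu : u ∈ I) (ht : t ∈ I)
    (hsut : u ∈ uIcc s t) : dist (γ s) (γ u) + dist (γ u) (γ t) = dist (γ s) (γ t) := by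
  rw [h s hs u hu, h u hu t ht, h s hs t ht]
  rcases mem_uIcc.1 hsut with ⟨h₁, h₂⟩ | ⟨h₁, h₂⟩
  · rw [abs_of_nonneg (by linarith), abs_of_nonneg (by linarith), abs_of_nonneg (by linarith)]
    ring
  · rw [abs_of_nonpos (by linarith), abs_of_nonpos (by linarith), abs_of_nonpos (by linarith)]
    ring

namespace IsGeodesicSegment

lemma dist_eq (h : IsGeodesicSegment γ T x y) : dist x y = T := by
  obtain ⟨hT, rfl, rfl, hg⟩ := h
  rw [hg 0 (left_mem_Icc.2 hT) T (right_mem_Icc.2 hT), sub_zero, abs_of_nonneg hT]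

lemma dist_left (h : IsGeodesicSegment γ T x y) (hs : s ∈ Icc 0 T) : dist x (γ s) = s := by
  rw [← h.2.1, h.2.2.2 0 (left_mem_Icc.2 h.1) s hs, sub_zero, abs_of_nonneg hs.1]

lemma dist_right (h : IsGeodesicSegment γ T x y) (hs : s ∈ Icc 0 T) : dist (γ s) y = T - s := by
  rw [← h.2.2.1, h.2.2.2 s hs T (right_mem_Icc.2 h.1), abs_of_nonneg (by linarith [hs.2])]

lemma dist_add_dist (h : IsGeodesicSegment γ T x y) (hs : s ∈ Icc 0 T) :
    dist x (γ s) + dist (γ s) y = dist x y := by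
  rw [h.dist_left hs, h.dist_right hs, h.dist_eq]; ring

lemma reverse (h : IsGeodesicSegment γ T x y) : IsGeodesicSegment (fun t => γ (T - t)) T y x := by
  obtain ⟨hT, hx, hy, hg⟩ := h
  refine ⟨hT, by simpa using hy, by simpa using hx, fun s hs t ht => ?_⟩
  rw [hg (T - s) ⟨by linarith [hs.2], by linarith [hs.1]⟩ (T - t)
    ⟨by linarith [ht.2], by linarith [ht.1]⟩, abs_sub_comm]
  ring_nf

lemma subsegment (h : IsGeodesicSegment γ T x y) (hs : 0 ≤ s) (hst : s ≤ t) (ht : t ≤ T) :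
    IsGeodesicSegment (fun u => γ (s + u)) (t - s) (γ s) (γ t) := by
  refine ⟨by linarith, by simp, by simp, fun a ha b hb => ?_⟩
  rw [h.2.2.2 (s + a) ⟨by linarith [ha.1], by linarith [ha.2]⟩ (s + b)
    ⟨by linarith [hb.1], by linarith [hb.2]⟩, add_sub_add_left_eq_sub]

lemma initial (h : IsGeodesicSegment γ T x y) (ht : t ∈ Icc 0 T) :
    IsGeodesicSegment γ t x (γ t) :=
  ⟨ht.1, h.2.1, rfl, h.2.2.2.mono (Icc_subset_Icc_right ht.2)⟩

end IsGeodesicSegment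

lemma exists_dist_lt_of_mem_uIcc {δ : ℝ} (hα : ContinuousOn α (uIcc s t))
    (hAB : ∀ u ∈ uIcc s t, ∃ a ∈ A ∪ B, dist (α u) a < δ)
    (hs : ∃ a ∈ A, dist (α s) a < δ) (ht : ∃ b ∈ B, dist (α t) b < δ) :
    ∃ u ∈ uIcc s t, (∃ a ∈ A, dist (α u) a < δ) ∧ ∃ b ∈ B, dist (α u) b < δ := by
  simp only [← mem_thickening_iff, thickening_union] at hAB hs ht ⊢
  obtain ⟨_, ⟨u, hu, rfl⟩, huA, huB⟩ := (isPreconnected_uIcc.image α hα) _ _ isOpen_thickening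
    isOpen_thickening (image_subset_iff.2 hAB) ⟨_, mem_image_of_mem α left_mem_uIcc, hs⟩
    ⟨_, mem_image_of_mem α right_mem_uIcc, ht⟩
  exact ⟨u, hu, huA, huB⟩

lemma infDist_eq_of_mem_projSet (hp : p ∈ projSet A x) : infDist x A = dist x p :=
  (infDist_le_dist_of_mem hp.1).antisymm ((le_infDist ⟨p, hp.1⟩).2 fun {z} hz => hp.2 z hz)

lemma self_mem_projSet (hx : x ∈ A) : x ∈ projSet A x :=
  ⟨hx, fun z _ => by simp⟩

lemma projSet_nonempty_of_isClosed [ProperSpace X] (hA : IsClosed A) (hne : A.Nonempty) (x : X) :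
    (projSet A x).Nonempty := by
  obtain ⟨p, hp, hd⟩ := hA.exists_infDist_eq_dist hne x
  exact ⟨p, hp, fun z hz => hd ▸ infDist_le_dist_of_mem hz⟩

lemma mem_projSet_of_dist_add_dist (hq : q ∈ projSet A x)
    (hz : dist x z + dist z q = dist x q) : q ∈ projSet A z :=
  ⟨hq.1, fun w hw => by linarith [hq.2 w hw, dist_triangle x z w]⟩

end Geodesics

/-! ### Bottleneck sets -/

section Contracting

variable {X : Type*} [MetricSpace X] {C R : ℝ} {A : Set X} {α : ℝ → X} {S : ℝ} {x y p q : X}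

/-- `A` is a `D`-bottleneck: a geodesic between points whose projections to `A` are more than `D`
apart passes within `D` of the projection of its initial point, and (by reversal) of the
projection of its endpoint. The existence of projections is part of the notion. -/
structure Bottleneck (D : ℝ) (A : Set X) : Prop where
  nonneg : 0 ≤ D
  projSet_nonempty : ∀ x, (projSet A x).Nonempty
  exists_near_left : ∀ {x y p q : X}, p ∈ projSet A x → q ∈ projSet A y → D < dist p q →
    ∀ {α : ℝ → X} {S : ℝ}, IsGeodesicSegment α S x y → ∃ s ∈ Icc 0 S, dist (α s) p ≤ D

lemma Bottleneck.exists_near_right {D : ℝ} (hA : Bottleneck D A) (hp : p ∈ projSet A x)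
    (hq : q ∈ projSet A y) (hpq : D < dist p q) (hα : IsGeodesicSegment α S x y) :
    ∃ s ∈ Icc 0 S, dist (α s) q ≤ D := by
  obtain ⟨s, hs, hd⟩ := hA.exists_near_left hq hp (by rwa [dist_comm]) hα.reverse
  exact ⟨S - s, ⟨by linarith [hs.2], by linarith [hs.1]⟩, hd⟩

namespace ContractingSet

lemma mono {C' : ℝ} (h : ContractingSet C A) (hC : C ≤ C') : ContractingSet C' A :=
  fun x y hy z hz p hp q hq => (h x y hy z hz p hp q hq).trans hC

lemma dist_proj_le (h : ContractingSet C A) (hp : p ∈ projSet A x) (hq : q ∈ projSet A y)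
    (hxy : dist x y < infDist x A) : dist p q ≤ C :=
  h x x (mem_ball_self (dist_nonneg.trans_lt hxy)) y (by rwa [mem_ball, dist_comm]) p hp q hq

lemma dist_proj_le_succ_mul (h : ContractingSet C A) (hproj : ∀ x, (projSet A x).Nonempty)
    (n : ℕ) (hα : IsGeodesicSegment α S x y) (hS : S ≤ (n + 1) * R)
    (hfar : ∀ s ∈ Icc 0 S, R < infDist (α s) A) (hp : p ∈ projSet A x) (hq : q ∈ projSet A y) :
    dist p q ≤ (n + 1) * C := by
  have hx : R < infDist x A := hα.2.1 ▸ hfar 0 (left_mem_Icc.2 hα.1)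
  induction n generalizing α S x p with
  | zero =>
    have := h.dist_proj_le hp hq (by rw [hα.dist_eq]; push_cast at hS; linarith)
    simpa using this
  | succ n ih =>
    push_cast at hS ⊢
    have hn : (0 : ℝ) < n + 2 := by positivity
    set t := S / (n + 2)
    have htS : (n + 2) * t = S := mul_div_cancel₀ S hn.ne'
    have ht : t ∈ Icc 0 S :=
      ⟨div_nonneg hα.1 hn.le, div_le_self hα.1 (by linarith [n.cast_nonneg (α := ℝ)])⟩
    have htR : t ≤ R := le_of_mul_le_mul_left (by linarith) hn
    have hSt : S - t ≤ (n + 1) * R := by nlinarith [n.cast_nonneg (α := ℝ)]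
    obtain ⟨r, hr⟩ := hproj (α t)
    have hpr : dist p r ≤ C := h.dist_proj_le hp hr (by rw [hα.dist_left ht]; linarith)
    have hrq := ih (hα.2.2.1 ▸ hα.subsegment ht.1 ht.2 le_rfl) hSt
      (fun s hs => hfar (t + s) ⟨by linarith [hs.1, ht.1], by linarith [hs.2]⟩) hr
      (hfar t ht)
    linarith [dist_triangle p r q]

lemma dist_proj_le_length (h : ContractingSet C A) (hC : 0 ≤ C)
    (hproj : ∀ x, (projSet A x).Nonempty) (hR : 0 < R) (hα : IsGeodesicSegment α S x y)
    (hfar : ∀ s ∈ Icc 0 S, R < infDist (α s) A) (hp : p ∈ projSet A x) (hq : q ∈ projSet A y) :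
    dist p q ≤ (S / R + 1) * C :=
  calc dist p q ≤ (⌊S / R⌋₊ + 1) * C :=
        h.dist_proj_le_succ_mul hproj _ hα ((div_le_iff₀ hR).1 (Nat.lt_floor_add_one _).le)
          hfar hp hq
    _ ≤ (S / R + 1) * C := by gcongr; exact Nat.floor_le (div_nonneg hα.1 hR.le)

-- The part of `α` between the two balls of radius `d(·, A) - 2 * C` around its ends has length at
-- most `dist p q + 4 * C`, and projections move along it at half speed.
lemma dist_proj_le_of_far (h : ContractingSet C A) (hC : 0 < C)
    (hproj : ∀ x, (projSet A x).Nonempty) (hα : IsGeodesicSegment α S x y)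
    (hfar : ∀ s ∈ Icc 0 S, 2 * C < infDist (α s) A)
    (hp : p ∈ projSet A x) (hq : q ∈ projSet A y) : dist p q ≤ 10 * C := by
  have hx := hfar 0 (left_mem_Icc.2 hα.1)
  have hy := hfar S (right_mem_Icc.2 hα.1)
  rw [hα.2.1, infDist_eq_of_mem_projSet hp] at hx
  rw [hα.2.2.1, infDist_eq_of_mem_projSet hq] at hy
  set u := min S (dist x p - 2 * C) with hu
  set v := max 0 (S - (dist y q - 2 * C)) with hv
  have huI : u ∈ Icc 0 S := ⟨le_min hα.1 (by linarith), min_le_left _ _⟩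
  have hvI : v ∈ Icc 0 S := ⟨le_max_left _ _, max_le hα.1 (by linarith)⟩
  have hup : u ≤ dist x p - 2 * C := min_le_right _ _
  have hvq : S - (dist y q - 2 * C) ≤ v := le_max_right _ _
  obtain ⟨r, hr⟩ := hproj (α u)
  have hpr : dist p r ≤ C := h.dist_proj_le hp hr (by
    rw [infDist_eq_of_mem_projSet hp, hα.dist_left huI]; linarith)
  have near_q {w : ℝ} {r : X} (hw : w ∈ Icc 0 S) (hvw : v ≤ w) (hr : r ∈ projSet A (α w)) :
      dist q r ≤ C := h.dist_proj_le hq hr (by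
    rw [infDist_eq_of_mem_projSet hq, dist_comm, hα.dist_right hw]; linarith)
  rcases le_or_gt v u with hvu | huv
  · linarith [dist_triangle_right p q r, near_q huI hvu hr]
  obtain ⟨r', hr'⟩ := hproj (α v)
  have hu' : u = dist x p - 2 * C := by
    rcases min_choice S (dist x p - 2 * C) with h | h <;> rw [h] at hu <;> linarith [hvI.2]
  have hv' : v = S - (dist y q - 2 * C) := by
    rcases max_choice 0 (S - (dist y q - 2 * C)) with h | h <;> rw [h] at hv <;> linarith [huI.1]
  have hlen : v - u ≤ dist p q + 4 * C := by
    linarith [dist_triangle4_right x y p q, hα.dist_eq]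
  have hrr' := h.dist_proj_le_length hC.le hproj (by linarith) (hα.subsegment huI.1 huv.le hvI.2)
    (fun s hs => hfar (u + s) ⟨by linarith [hs.1, huI.1], by linarith [hs.2, hvI.2]⟩) hr hr'
  have hhalf : ((v - u) / (2 * C) + 1) * C = (v - u) / 2 + C := by field_simp
  linarith [dist_triangle4 p r r' q, dist_comm q r', near_q hvI le_rfl hr']

lemma exists_near_left (h : ContractingSet C A) (hC : 0 < C)
    (hproj : ∀ x, (projSet A x).Nonempty) (hp : p ∈ projSet A x) (hq : q ∈ projSet A y)
    (hpq : 13 * C < dist p q) (hα : IsGeodesicSegment α S x y) :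
    ∃ s ∈ Icc 0 S, dist (α s) p ≤ 13 * C := by
  set Z := Icc 0 S ∩ (fun s => infDist (α s) A) ⁻¹' Iic (2 * C)
  have hZc : IsClosed Z := ((continuous_infDist_pt A).comp_continuousOn
    hα.2.2.2.continuousOn).preimage_isClosed_of_isClosed isClosed_Icc isClosed_Iic
  have hZne : Z.Nonempty := by
    by_contra! hZ
    refine absurd (h.dist_proj_le_of_far hC hproj hα (fun s hs => ?_) hp hq) (by linarith)
    exact not_le.1 fun hle => (hZ ▸ (⟨hs, hle⟩ : s ∈ Z) : s ∈ (∅ : Set ℝ))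
  obtain ⟨v, ⟨hvI, hv : infDist (α v) A ≤ 2 * C⟩, hmin⟩ :=
    (isCompact_Icc.of_isClosed_subset hZc inter_subset_left).exists_isLeast hZne
  rcases hvI.1.eq_or_lt with rfl | hv0
  · rw [hα.2.1, infDist_eq_of_mem_projSet hp] at hv
    exact ⟨0, hvI, by rw [hα.2.1]; linarith⟩
  set u := max 0 (v - C)
  have huv : u < v := max_lt hv0 (by linarith)
  have huI : u ∈ Icc 0 S := ⟨le_max_left _ _, huv.le.trans hvI.2⟩
  obtain ⟨r, hr⟩ := hproj (α u)
  have hpr : dist p r ≤ 10 * C := h.dist_proj_le_of_far hC hproj (hα.initial huI) (fun s hs =>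
    not_le.1 fun hle => by linarith [hs.2, hmin ⟨⟨hs.1, hs.2.trans huI.2⟩, hle⟩]) hp hr
  have hur : dist (α u) r ≤ 3 * C := by
    have hle := infDist_le_infDist_add_dist (s := A) (x := α u) (y := α v)
    rw [infDist_eq_of_mem_projSet hr, hα.2.2.2 u huI v hvI, abs_of_pos (by linarith)] at hle
    linarith [le_max_right 0 (v - C)]
  exact ⟨u, huI, by linarith [dist_triangle_right (α u) p r]⟩

lemma bottleneck (h : ContractingSet C A) (hC : 0 < C) (hproj : ∀ x, (projSet A x).Nonempty) :
    Bottleneck (13 * C) A :=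
  ⟨by linarith, hproj, fun hp hq hpq _ _ hα => h.exists_near_left hC hproj hp hq hpq hα⟩

end ContractingSet

end Contracting

namespace Bottleneck

variable {X : Type*} [MetricSpace X] {D : ℝ} {A B : Set X} {x y z p q a b : X}

lemma dist_add_dist_le (hX : GeodesicSpace X) (hA : Bottleneck D A) (hp : p ∈ projSet A x)
    (hz : z ∈ A) : dist x p + dist p z ≤ dist x z + 2 * D := by
  rcases lt_or_ge D (dist p z) with h | h
  · obtain ⟨α, S, hα⟩ := hX x z
    obtain ⟨s, hs, hd⟩ := hA.exists_near_left hp (self_mem_projSet hz) h hα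
    linarith [hα.dist_add_dist hs, dist_triangle x (α s) p, dist_triangle_left p z (α s)]
  · linarith [hp.2 z hz, hA.nonneg]

lemma dist_proj_le (hX : GeodesicSpace X) (hA : Bottleneck D A) (hp : p ∈ projSet A x)
    (hq : q ∈ projSet A y) : dist p q ≤ dist x y + 2 * D := by
  rcases lt_or_ge D (dist p q) with h | h
  · obtain ⟨α, S, hα⟩ := hX x y
    obtain ⟨s, hs, hsp⟩ := hA.exists_near_left hp hq h hα
    obtain ⟨t, ht, htq⟩ := hA.exists_near_right hp hq h hα
    have hst : dist (α s) (α t) ≤ S := by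
      rw [hα.2.2.2 s hs t ht, abs_le]
      exact ⟨by linarith [hs.2, ht.1], by linarith [hs.1, ht.2]⟩
    linarith [dist_triangle4_left (α s) (α t) p q, hα.dist_eq]
  · linarith [dist_nonneg (x := x) (y := y), hA.nonneg]

lemma quasiconvex {ε : ℝ} (hX : GeodesicSpace X) (hA : Bottleneck D A)
    (hxzy : dist x z + dist z y = dist x y) (ha : a ∈ A) (hb : b ∈ A) (hxa : dist x a ≤ ε)
    (hyb : dist y b ≤ ε) (hp : p ∈ projSet A z) : dist z p ≤ 2 * D + 2 * ε := by
  linarith [hA.dist_add_dist_le hX hp ha, hA.dist_add_dist_le hX hp hb, dist_triangle_left a b p,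
    dist_triangle4_right x y a b, dist_triangle_left z a x, dist_triangle z y b]

lemma transfer (hX : GeodesicSpace X) (hA : Bottleneck D A) (hB : Bottleneck D B)
    (hp : p ∈ projSet A x) (hb : b ∈ projSet B x) (hq : q ∈ projSet A b) (ha : a ∈ projSet B q)
    (hpq : D < dist p q) : dist b a ≤ 3 * D := by
  obtain ⟨α, S, hα⟩ := hX x b
  obtain ⟨s, hs, hd⟩ := hA.exists_near_right hp hq hpq hα
  linarith [hB.dist_proj_le hX (mem_projSet_of_dist_add_dist hb (hα.dist_add_dist hs)) ha]

lemma dist_proj_le_of_near {R R' : ℝ} (hX : GeodesicSpace X) (hA : Bottleneck D A)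
    (hp : p ∈ projSet A z) (hq : q ∈ projSet B z) (ha : a ∈ A) (hqa : dist q a ≤ R) (hb : b ∈ B)
    (hpb : dist p b ≤ R') : dist p q ≤ 2 * R + R' + 2 * D := by
  linarith [hA.dist_add_dist_le hX hp ha, hq.2 b hb, dist_triangle z q a, dist_triangle z p b,
    dist_triangle_right p q a]

end Bottleneck

/-! ### Junctions -/

section Junctions

variable {X : Type*} [MetricSpace X] {D K K' r r' : ℝ} {A B : Set X} {a b c d p x y : X}

/-- Every closest-point projection of `x` to `A` lies within `r` of `c`. -/
def ProjectsNear (A : Set X) (c : X) (r : ℝ) (x : X) : Prop :=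
  projSet A x ⊆ closedBall c r

/-- `A` projects to `B` within `K` of `b`, and `B` to `A` within `K` of `a`: for bottlenecks `A` and
`B` this says that geodesics from `A` to `B` leave `A` near `a` and enter `B` near `b`. -/
structure Junction (K : ℝ) (A B : Set X) (a b : X) : Prop where
  left : ∀ y ∈ B, ProjectsNear A a K y
  right : ∀ y ∈ A, ProjectsNear B b K y

lemma ProjectsNear.mono (h : ProjectsNear A c r x) (hr : r ≤ r') : ProjectsNear A c r' x :=
  h.trans (closedBall_subset_closedBall hr)

lemma ProjectsNear.trans (h : ProjectsNear A c r x) (hcd : dist c d ≤ r') :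
    ProjectsNear A d (r + r') x :=
  fun _ hp => (dist_triangle _ c d).trans (add_le_add (h hp) hcd)

lemma ProjectsNear.exists_near (hA : Bottleneck D A) (hx : ProjectsNear A c r x)
    (hy : ProjectsNear A d r y) (hcd : 2 * r + D < dist c d) {α : ℝ → X} {S : ℝ}
    (hα : IsGeodesicSegment α S x y) :
    (∃ s ∈ Icc 0 S, dist (α s) c ≤ r + D) ∧ ∃ s ∈ Icc 0 S, dist (α s) d ≤ r + D := by
  obtain ⟨p, hp⟩ := hA.projSet_nonempty x
  obtain ⟨q, hq⟩ := hA.projSet_nonempty y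
  have hpc : dist p c ≤ r := hx hp
  have hqd : dist q d ≤ r := hy hq
  have hpq : D < dist p q := by linarith [dist_triangle4_left p q c d]
  obtain ⟨s, hs, hsp⟩ := hA.exists_near_left hp hq hpq hα
  obtain ⟨t, ht, htq⟩ := hA.exists_near_right hp hq hpq hα
  exact ⟨⟨s, hs, by linarith [dist_triangle (α s) p c]⟩,
    ⟨t, ht, by linarith [dist_triangle (α t) q d]⟩⟩

namespace Bottleneck

lemma projectsNear_of_lt_dist (hX : GeodesicSpace X) (hA : Bottleneck D A) (hB : Bottleneck D B)
    (h : Junction K A B a b) (hp : p ∈ projSet A x) (hpa : K + D < dist p a) :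
    ProjectsNear B b (K + 3 * D) x := by
  intro b' hb'
  obtain ⟨q, hq⟩ := hA.projSet_nonempty b'
  obtain ⟨c, hc⟩ := hB.projSet_nonempty q
  have hqa : dist q a ≤ K := h.left b' hb'.1 hq
  have hcb : dist c b ≤ K := h.right q hq.1 hc
  have hbc := hA.transfer hX hB hp hb' hq hc (by linarith [dist_triangle p q a])
  exact mem_closedBall.2 (by linarith [dist_triangle b' c b])

lemma projectsNear_left_of_bridge (hX : GeodesicSpace X) (hA : Bottleneck D A)
    (hB : Bottleneck D B) (hab : ProjectsNear A a K b) (hba : ProjectsNear B b K a)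
    (hfar : 5 * D + 3 * K < dist a b) (hy : y ∈ B) : ProjectsNear A a (2 * K + 3 * D) y := by
  intro q hq
  rw [mem_closedBall]
  by_contra! hcon
  obtain ⟨b₁, hb₁⟩ := hB.projSet_nonempty a
  obtain ⟨q₁, hq₁⟩ := hA.projSet_nonempty b₁
  obtain ⟨q₂, hq₂⟩ := hA.projSet_nonempty b
  have hbb₁ : dist b₁ b ≤ K := hba hb₁
  have hq₁a : dist q₁ a ≤ 2 * K + 2 * D := by
    have hq₂a : dist q₂ a ≤ K := hab hq₂
    linarith [hA.dist_proj_le hX hq₁ hq₂, dist_triangle q₁ q₂ a]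
  obtain ⟨α, S, hα⟩ := hX y b₁
  obtain ⟨s, hs, hd⟩ := hA.exists_near_right hq hq₁
    (by linarith [hA.nonneg, dist_triangle q q₁ a]) hα
  obtain ⟨r, hr⟩ := hB.projSet_nonempty (α s)
  have hsr := hB.quasiconvex hX (ε := 0) (hα.dist_add_dist hs) hy hb₁.1 (by simp) (by simp) hr
  linarith [hb₁.2 r hr.1, dist_triangle4 a q₁ (α s) r, dist_comm a q₁, dist_comm q₁ (α s),
    dist_triangle a b₁ b]

end Bottleneck

namespace Junction

lemma symm (h : Junction K A B a b) : Junction K B A b a :=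
  ⟨h.right, h.left⟩

lemma mono (h : Junction K A B a b) (hK : K ≤ K') : Junction K' A B a b :=
  ⟨fun y hy => (h.left y hy).mono hK, fun y hy => (h.right y hy).mono hK⟩

lemma of_bridge (hX : GeodesicSpace X) (hA : Bottleneck D A) (hB : Bottleneck D B)
    (hab : ProjectsNear A a K b) (hba : ProjectsNear B b K a)
    (hfar : 5 * D + 3 * K < dist a b) : Junction (2 * K + 3 * D) A B a b :=
  ⟨fun _ => hA.projectsNear_left_of_bridge hX hB hab hba hfar,
    fun _ => hB.projectsNear_left_of_bridge hX hA hba hab (by rwa [dist_comm])⟩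

lemma projectsNear (hX : GeodesicSpace X) (hA : Bottleneck D A) (hB : Bottleneck D B)
    (h : Junction K A B a b) (hx : ProjectsNear A c (K + 3 * D) x)
    (hca : 2 * K + 4 * D < dist c a) : ProjectsNear B b (K + 3 * D) x := by
  obtain ⟨p, hp⟩ := hA.projSet_nonempty x
  have hpc : dist p c ≤ K + 3 * D := hx hp
  exact hA.projectsNear_of_lt_dist hX hB h hp (by linarith [dist_triangle_left c a p])

lemma projectsNear_or (hX : GeodesicSpace X) (hA : Bottleneck D A) (hB : Bottleneck D B)
    (h : Junction K A B a b) (x : X) :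
    ProjectsNear A a (K + D) x ∨ ProjectsNear B b (K + 3 * D) x := by
  by_contra! hcon
  obtain ⟨p, hp, hpa⟩ := not_subset.1 hcon.1
  exact hcon.2 (hA.projectsNear_of_lt_dist hX hB h hp (not_le.1 hpa))

end Junction

/-- Four sets in a row, joined by junctions `(aᵢ, bᵢ)` whose endpoints on the two middle sets are
far apart. Geodesics from far out on `A₀` to far out on `A₃` follow all three junctions. -/
structure JunctionChain (D K : ℝ) (A₀ A₁ A₂ A₃ : Set X) (a₀ b₀ a₁ b₁ a₂ b₂ : X) : Prop where
  bottleneck₀ : Bottleneck D A₀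
  bottleneck₁ : Bottleneck D A₁
  bottleneck₂ : Bottleneck D A₂
  bottleneck₃ : Bottleneck D A₃
  junction₀ : Junction K A₀ A₁ a₀ b₀
  junction₁ : Junction K A₁ A₂ a₁ b₁
  junction₂ : Junction K A₂ A₃ a₂ b₂
  lt_dist₁ : 2 * K + 7 * D < dist b₀ a₁
  lt_dist₂ : 2 * K + 7 * D < dist b₁ a₂

namespace JunctionChain

variable {A₀ A₁ A₂ A₃ : Set X} {a₀ b₀ a₁ b₁ a₂ b₂ q : X}

lemma symm (h : JunctionChain D K A₀ A₁ A₂ A₃ a₀ b₀ a₁ b₁ a₂ b₂) :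
    JunctionChain D K A₃ A₂ A₁ A₀ b₂ a₂ b₁ a₁ b₀ a₀ :=
  ⟨h.bottleneck₃, h.bottleneck₂, h.bottleneck₁, h.bottleneck₀, h.junction₂.symm, h.junction₁.symm,
    h.junction₀.symm, dist_comm b₁ a₂ ▸ h.lt_dist₂, dist_comm b₀ a₁ ▸ h.lt_dist₁⟩

lemma projectsNear₁ (hX : GeodesicSpace X) (h : JunctionChain D K A₀ A₁ A₂ A₃ a₀ b₀ a₁ b₁ a₂ b₂)
    (hp : p ∈ projSet A₀ x) (hpa : K + D < dist p a₀) : ProjectsNear A₁ b₀ (K + 3 * D) x :=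
  h.bottleneck₀.projectsNear_of_lt_dist hX h.bottleneck₁ h.junction₀ hp hpa

lemma projectsNear₂ (hX : GeodesicSpace X) (h : JunctionChain D K A₀ A₁ A₂ A₃ a₀ b₀ a₁ b₁ a₂ b₂)
    (hp : p ∈ projSet A₀ x) (hpa : K + D < dist p a₀) : ProjectsNear A₂ b₁ (K + 3 * D) x :=
  h.junction₁.projectsNear hX h.bottleneck₁ h.bottleneck₂ (h.projectsNear₁ hX hp hpa)
    (by linarith [h.lt_dist₁, h.bottleneck₀.nonneg])

lemma projectsNear₃ (hX : GeodesicSpace X) (h : JunctionChain D K A₀ A₁ A₂ A₃ a₀ b₀ a₁ b₁ a₂ b₂)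
    (hp : p ∈ projSet A₀ x) (hpa : K + D < dist p a₀) : ProjectsNear A₃ b₂ (K + 3 * D) x :=
  h.junction₂.projectsNear hX h.bottleneck₂ h.bottleneck₃ (h.projectsNear₂ hX hp hpa)
    (by linarith [h.lt_dist₂, h.bottleneck₀.nonneg])

lemma exists_near_right (hX : GeodesicSpace X)
    (h : JunctionChain D K A₀ A₁ A₂ A₃ a₀ b₀ a₁ b₁ a₂ b₂)
    (hp : p ∈ projSet A₀ x) (hpa : K + D < dist p a₀) (hq : q ∈ projSet A₃ y)
    (hqb : K + D < dist q b₂) {α : ℝ → X} {S : ℝ} (hα : IsGeodesicSegment α S x y) :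
    ∃ s ∈ Icc 0 S, dist (α s) b₁ ≤ K + 4 * D := by
  obtain ⟨s, hs, hd⟩ := ((h.projectsNear₂ hX hp hpa).exists_near h.bottleneck₂
    (h.symm.projectsNear₁ hX hq hqb) (by linarith [h.lt_dist₂]) hα).1
  exact ⟨s, hs, by linarith⟩

lemma exists_near_left (hX : GeodesicSpace X)
    (h : JunctionChain D K A₀ A₁ A₂ A₃ a₀ b₀ a₁ b₁ a₂ b₂)
    (hp : p ∈ projSet A₀ x) (hpa : K + D < dist p a₀) (hq : q ∈ projSet A₃ y)
    (hqb : K + D < dist q b₂) {α : ℝ → X} {S : ℝ} (hα : IsGeodesicSegment α S x y) :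
    ∃ s ∈ Icc 0 S, dist (α s) a₁ ≤ K + 4 * D := by
  obtain ⟨s, hs, hd⟩ := ((h.projectsNear₁ hX hp hpa).exists_near h.bottleneck₁
    (h.symm.projectsNear₂ hX hq hqb) (by linarith [h.lt_dist₁]) hα).2
  exact ⟨s, hs, by linarith⟩

end JunctionChain

end Junctions

/-! ### Isometric actions -/

section Smul

variable {G X : Type*} [Group G] [MetricSpace X] [MulAction G X] [IsIsometricSMul G X]
  {D K r : ℝ} {A B : Set X} {a b c p x y : X}

lemma dist_inv_smul_left (g : G) (x y : X) : dist (g⁻¹ • x) y = dist x (g • y) := by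
  rw [← dist_smul g, smul_inv_smul]

lemma GeodesicOn.smul {I : Set ℝ} {γ : ℝ → X} (h : GeodesicOn I γ) (g : G) :
    GeodesicOn I fun t => g • γ t :=
  fun s hs t ht => (dist_smul g _ _).trans (h s hs t ht)

lemma IsGeodesicSegment.smul {γ : ℝ → X} {T : ℝ} (h : IsGeodesicSegment γ T x y) (g : G) :
    IsGeodesicSegment (fun t => g • γ t) T (g • x) (g • y) :=
  ⟨h.1, congrArg (g • ·) h.2.1, congrArg (g • ·) h.2.2.1, h.2.2.2.smul g⟩

lemma smul_mem_projSet_smul (g : G) : g • p ∈ projSet (g • A) (g • x) ↔ p ∈ projSet A x := by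
  refine and_congr smul_mem_smul_set_iff ?_
  simp only [← image_smul, forall_mem_image, dist_smul]

lemma mem_projSet_smul (g : G) : p ∈ projSet (g • A) x ↔ g⁻¹ • p ∈ projSet A (g⁻¹ • x) := by
  rw [← smul_mem_projSet_smul g (p := g⁻¹ • p), smul_inv_smul, smul_inv_smul]

lemma Bottleneck.smul (h : Bottleneck D A) (g : G) : Bottleneck D (g • A) where
  nonneg := h.nonneg
  projSet_nonempty x := by
    obtain ⟨p, hp⟩ := h.projSet_nonempty (g⁻¹ • x)
    exact ⟨g • p, (mem_projSet_smul g).2 (by rwa [inv_smul_smul])⟩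
  exists_near_left hp hq hpq α S hα := by
    simpa only [dist_smul] using h.exists_near_left ((mem_projSet_smul g).1 hp)
      ((mem_projSet_smul g).1 hq) (by rwa [dist_smul]) (hα.smul g⁻¹)

lemma ProjectsNear.smul (h : ProjectsNear A c r x) (g : G) :
    ProjectsNear (g • A) (g • c) r (g • x) := by
  intro p hp
  have hd : dist (g⁻¹ • p) c ≤ r := h (by rwa [mem_projSet_smul, inv_smul_smul] at hp)
  rwa [dist_inv_smul_left] at hd

lemma Junction.smul (h : Junction K A B a b) (g : G) :
    Junction K (g • A) (g • B) (g • a) (g • b) := by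
  constructor <;> rintro _ ⟨y, hy, rfl⟩
  exacts [(h.left y hy).smul g, (h.right y hy).smul g]

end Smul

/-! ### Orbits -/

section Orbits

variable {G X : Type*} [Group G] [MulAction G X] {w : G}

/-- The orbit of `x₀` under the powers of `w`. -/
def cyclicOrbit (w : G) (x₀ : X) : Set X :=
  range fun k : ℤ => w ^ k • x₀

lemma zpow_smul_mem_cyclicOrbit (w : G) (x₀ : X) (k : ℤ) : w ^ k • x₀ ∈ cyclicOrbit w x₀ :=
  mem_range_self k

lemma self_mem_cyclicOrbit (w : G) (x₀ : X) : x₀ ∈ cyclicOrbit w x₀ :=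
  ⟨0, by simp⟩

lemma zpow_smul_cyclicOrbit (w : G) (x₀ : X) (n : ℤ) :
    w ^ n • cyclicOrbit w x₀ = cyclicOrbit w x₀ := by
  rw [cyclicOrbit, smul_set_range]
  simp only [smul_smul, ← zpow_add]
  exact (Equiv.addLeft n).surjective.range_comp fun k : ℤ => w ^ k • x₀

lemma smul_cyclicOrbit (g w : G) (x₀ : X) :
    g • cyclicOrbit w x₀ = cyclicOrbit (g * w * g⁻¹) (g • x₀) := by
  simp only [cyclicOrbit, smul_set_range, smul_smul, conj_zpow, inv_mul_cancel_right]

lemma exists_seq_pairwise_lt_abs_sub {ι : Type*} {f : ι → ℝ} (hf : ∀ r, ∃ k, r < f k) (B : ℝ) :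
    ∃ μ : ℕ → ι, (∀ i, B < f (μ i)) ∧ Pairwise fun i j => B < |f (μ i) - f (μ j)| := by
  have : Std.Symm fun k l => B < |f k - f l| := ⟨fun k l h => by rwa [abs_sub_comm]⟩
  obtain ⟨μ, hμ, hB⟩ := exists_seq_of_forall_finset_exists' (fun k => B < f k)
    (fun k l => B < |f k - f l|) fun s _ => by
      obtain ⟨M, hM⟩ := (s.finite_toSet.image f).bddAbove
      obtain ⟨k, hk⟩ := hf (max B (M + B))
      refine ⟨k, (le_max_left _ _).trans_lt hk, fun l hl => lt_abs.2 (Or.inr ?_)⟩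
      linarith [le_max_right B (M + B), hM (mem_image_of_mem f hl)]
  exact ⟨μ, hμ, fun i j hij => hB hij⟩

variable [MetricSpace X]

section Proper

variable [ProperSpace X] [ProperlyDiscontinuousSMul G X]

lemma finite_setOf_dist_smul_le (x y : X) (r : ℝ) : {g : G | dist (g • x) y ≤ r}.Finite := by
  refine (ProperlyDiscontinuousSMul.finite_disjoint_inter_image (Γ := G)
    (isCompact_singleton (x := x)) (isCompact_closedBall y r)).subset fun g hg => ?_
  exact ⟨g • x, ⟨x, rfl, rfl⟩, hg⟩

lemma tendsto_dist_zpow_smul (hw : ¬ IsOfFinOrder w) (x y : X) :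
    Tendsto (fun k : ℤ => dist x (w ^ k • y)) cofinite atTop := by
  refine tendsto_atTop.2 fun r => eventually_cofinite.2 ?_
  refine ((finite_setOf_dist_smul_le (G := G) y x r).preimage
    (injective_zpow_iff_not_isOfFinOrder.2 hw).injOn).subset fun k hk => ?_
  simpa only [mem_preimage, mem_ofPred_eq, dist_comm x] using (not_le.1 hk).le

lemma projSet_cyclicOrbit_nonempty (hw : ¬ IsOfFinOrder w) (x₀ x : X) :
    (projSet (cyclicOrbit w x₀) x).Nonempty := by
  obtain ⟨k, hk⟩ := (tendsto_dist_zpow_smul hw x x₀).exists_forall_le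
  exact ⟨w ^ k • x₀, ⟨k, rfl⟩, forall_mem_range.2 hk⟩

end Proper

variable [IsIsometricSMul G X]

lemma exists_dist_smul_le_of_isCompact (x₀ : X) {K : Set X} (hK : IsCompact K)
    (hcov : ∀ y : X, ∃ g : G, ∃ k ∈ K, g • k = y) :
    ∃ R : ℝ, ∀ y : X, ∃ g : G, dist y (g • x₀) ≤ R := by
  obtain ⟨R, hR⟩ := hK.isBounded.subset_closedBall x₀
  refine ⟨R, fun y => ?_⟩
  obtain ⟨g, k, hk, rfl⟩ := hcov y
  exact ⟨g, by rw [dist_smul]; exact hR hk⟩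

lemma dist_zpow_smul_zpow_smul (w : G) (x : X) (a b : ℤ) :
    dist (w ^ a • x) (w ^ b • x) = dist x (w ^ (b - a) • x) := by
  rw [← dist_smul (w ^ a) x, ← mul_smul, ← zpow_add, add_sub_cancel]

lemma dist_pow_smul_le (w : G) (x : X) (n : ℕ) : dist x (w ^ n • x) ≤ n * dist x (w • x) := by
  have := dist_le_range_sum_dist (fun i => w ^ i • x) n
  simpa only [pow_zero, one_smul, pow_succ, mul_smul, dist_smul, Finset.sum_const,
    Finset.card_range, nsmul_eq_mul] using this

lemma dist_zpow_smul_le (w : G) (x : X) (k : ℤ) :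
    dist x (w ^ k • x) ≤ k.natAbs * dist x (w • x) := by
  obtain hk | hk := k.natAbs_eq
  · calc dist x (w ^ k • x) = dist x (w ^ k.natAbs • x) := by rw [← zpow_natCast, ← hk]
      _ ≤ _ := dist_pow_smul_le w x _
  · calc dist x (w ^ k • x) = dist x (w ^ k.natAbs • x) := by
          rw [← dist_smul (w ^ k.natAbs), ← mul_smul, ← zpow_natCast, ← zpow_add]
          nth_rw 3 [hk]
          rw [add_neg_cancel, zpow_zero, one_smul, dist_comm]
      _ ≤ _ := dist_pow_smul_le w x _

lemma exists_dist_zpow_smul_le_of_mem_Icc [ProperSpace X] [ProperlyDiscontinuousSMul G X]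
    (hw : ¬ IsOfFinOrder w) (x : X) (r : ℝ) :
    ∃ B, 0 ≤ B ∧ ∀ k l m : ℤ, m ∈ Icc k l → dist (w ^ k • x) (w ^ l • x) ≤ r →
      dist (w ^ k • x) (w ^ m • x) ≤ B := by
  have hfin := eventually_cofinite.1 ((tendsto_dist_zpow_smul hw x x).eventually_gt_atTop r)
  obtain ⟨n, hn⟩ := (hfin.image Int.natAbs).bddAbove
  refine ⟨n * dist x (w • x), by positivity, fun k l m hm hkl => ?_⟩
  rw [dist_zpow_smul_zpow_smul] at hkl ⊢
  have hln : (l - k).natAbs ≤ n := hn ⟨l - k, not_lt.2 hkl, rfl⟩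
  have hmn : (m - k).natAbs ≤ n := by have := hm.1; have := hm.2; omega
  exact (dist_zpow_smul_le w x _).trans (by gcongr)

end Orbits

/-! ### Bottleneck rays -/

section Ray

variable {X : Type*} [MetricSpace X] {γ α : ℝ → X} {D S a b r s t : ℝ} {x y : X}

lemma Bottleneck.exists_near_ray (hX : GeodesicSpace X) (hA : Bottleneck D (γ '' Ici 0))
    (hγ : GeodesicOn (Ici 0) γ) (ha : 0 ≤ a) (hx : γ a ∈ projSet (γ '' Ici 0) x)
    (hy : γ b ∈ projSet (γ '' Ici 0) y) (har : a ≤ r) (hrb : r ≤ b) (hab : a + D < b)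
    (hα : IsGeodesicSegment α S x y) : ∃ s ∈ Icc 0 S, dist (α s) (γ r) ≤ 12 * D + 3 := by
  have hD := hA.nonneg
  have hr : 0 ≤ r := ha.trans har
  have hdist : D < dist (γ a) (γ b) := by
    rw [hγ a ha b (hr.trans hrb)]
    exact lt_abs.2 (Or.inl (by linarith))
  obtain ⟨s, hs, hsa⟩ := hA.exists_near_left hx hy hdist hα
  obtain ⟨t, ht, htb⟩ := hA.exists_near_right hx hy hdist hα
  have hsub : uIcc s t ⊆ Icc 0 S := ordConnected_Icc.uIcc_subset hs ht
  have hnear : ∀ u ∈ uIcc s t,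
      ∃ z ∈ γ '' Icc 0 r ∪ γ '' Ici r, dist (α u) z < 4 * D + 1 := fun u hu => by
    obtain ⟨p, hp⟩ := hA.projSet_nonempty (α u)
    have hup := hA.quasiconvex hX (hα.2.2.2.dist_add_dist hs (hsub hu) ht hu) hx.1 hy.1 hsa htb hp
    rw [← image_union, Icc_union_Ici_eq_Ici hr]
    exact ⟨p, hp.1, by linarith⟩
  obtain ⟨u, hu, ⟨_, ⟨v, hv, rfl⟩, huv⟩, _, ⟨v', hv', rfl⟩, huv'⟩ :=
    exists_dist_lt_of_mem_uIcc (hα.2.2.2.continuousOn.mono hsub) hnear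
      ⟨γ a, ⟨a, ⟨ha, har⟩, rfl⟩, by linarith⟩ ⟨γ b, ⟨b, hrb, rfl⟩, by linarith⟩
  have hrv' : r ≤ v' := hv'
  have hvr := hγ v hv.1 r hr
  have hvv' := hγ v hv.1 v' (hr.trans hrv')
  rw [abs_of_nonneg (by linarith [hv.2])] at hvr hvv'
  refine ⟨u, hsub hu, ?_⟩
  linarith [dist_triangle (α u) (γ v) (γ r), dist_triangle_left (γ v) (γ v') (α u)]

lemma Bottleneck.dist_ray_mem_Icc (hX : GeodesicSpace X) (hA : Bottleneck D (γ '' Ici 0))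
    (hγ : GeodesicOn (Ici 0) γ) (ht : 0 ≤ t) (hp : γ t ∈ projSet (γ '' Ici 0) x) (hs : 0 ≤ s) :
    dist x (γ s) ∈ Icc (dist x (γ t) + |s - t| - 2 * D) (dist x (γ t) + |s - t|) := by
  rw [← hγ t ht s hs, mem_Icc, sub_le_iff_le_add]
  exact ⟨hA.dist_add_dist_le hX hp ⟨s, hs, rfl⟩, dist_triangle x (γ t) (γ s)⟩

end Ray

/-! ### An axis from a recurrent ray -/

section Axis

variable {G X : Type*} [Group G] [MetricSpace X] [MulAction G X]

/-- A bottleneck ray `γ` passing close to `y₀` at time `n`, which `w` carries close to itself with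
time shift `n' - n` on a window of radius `L` around `n`. Here `τ x` is the time of a chosen
projection of `x` to the ray. -/
structure RecurrentRay (w : G) (y₀ : X) (γ : ℝ → X) (τ : X → ℝ) (D R L n n' : ℝ) : Prop where
  geodesicOn : GeodesicOn (Ici 0) γ
  bottleneck : Bottleneck D (γ '' Ici 0)
  nonneg : ∀ x, 0 ≤ τ x
  mem_projSet : ∀ x, γ (τ x) ∈ projSet (γ '' Ici 0) x
  lt_window : 8 * D + 4 * R < L
  window_le : L ≤ n
  add_window_le : n + 3 * L ≤ n'
  dist_le : dist y₀ (γ n) ≤ R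
  dist_smul_le : dist (w • y₀) (γ n') ≤ R
  shift_left : dist (w • γ (n - L)) (γ (n' - L)) ≤ 2 * R
  shift_right : dist (w • γ (n + L)) (γ (n' + L)) ≤ 2 * R

namespace RecurrentRay

variable {w : G} {y₀ x y : X} {γ α : ℝ → X} {τ : X → ℝ} {D R L S n n' s : ℝ} {k l a b : ℤ}

lemma radius_nonneg (h : RecurrentRay w y₀ γ τ D R L n n') : 0 ≤ R :=
  dist_nonneg.trans h.dist_le

lemma dist_mem_Icc (hX : GeodesicSpace X) (h : RecurrentRay w y₀ γ τ D R L n n') (x : X)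
    (hs : 0 ≤ s) :
    dist x (γ s) ∈
      Icc (dist x (γ (τ x)) + |s - τ x| - 2 * D) (dist x (γ (τ x)) + |s - τ x|) :=
  h.bottleneck.dist_ray_mem_Icc hX h.geodesicOn (h.nonneg x) (h.mem_projSet x) hs

lemma lt_of_dist_le (hX : GeodesicSpace X) (h : RecurrentRay w y₀ γ τ D R L n n')
    (hx : dist x y₀ ≤ dist x (w • y₀)) : τ x < n' + L - (2 * D + 2 * R) := by
  by_contra! hτ
  have hD := h.bottleneck.nonneg
  have hR := h.radius_nonneg
  have hL := h.lt_window
  have hn := (h.dist_mem_Icc hX x (s := n) (by linarith [h.window_le])).1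
  have hn' := (h.dist_mem_Icc hX x (s := n') (by linarith [h.window_le, h.add_window_le])).2
  rw [abs_of_nonpos (by linarith [h.add_window_le])] at hn hn'
  linarith [h.add_window_le, h.dist_le, h.dist_smul_le, dist_triangle x y₀ (γ n),
    dist_triangle_right x (w • y₀) (γ n')]

lemma gt_of_dist_le (hX : GeodesicSpace X) (h : RecurrentRay w y₀ γ τ D R L n n')
    (hx : dist x (w • y₀) ≤ dist x y₀) : n - L + (2 * D + 2 * R) < τ x := by
  by_contra! hτ
  have hD := h.bottleneck.nonneg
  have hR := h.radius_nonneg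
  have hL := h.lt_window
  have hn := (h.dist_mem_Icc hX x (s := n) (by linarith [h.window_le])).2
  have hn' := (h.dist_mem_Icc hX x (s := n') (by linarith [h.window_le, h.add_window_le])).1
  rw [abs_of_nonneg (by linarith [h.add_window_le])] at hn hn'
  linarith [h.add_window_le, h.dist_le, h.dist_smul_le, dist_triangle x (w • y₀) (γ n'),
    dist_triangle_right x y₀ (γ n)]

variable [IsIsometricSMul G X]

-- Seen from a point `x`, the two ends of the window are at almost the same distances as their
-- shifts seen from `w • x`; up to `2 * D` these distances differ as their times do from `τ`.
lemma abs_shift_sub_shift_le (hX : GeodesicSpace X) (h : RecurrentRay w y₀ γ τ D R L n n')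
    (x : X) :
    |(|n' + L - τ x| - |n' - L - τ x|) - (|n + L - τ (w⁻¹ • x)| - |n - L - τ (w⁻¹ • x)|)| ≤
      4 * D + 4 * R := by
  have hL : 0 < L := by linarith [h.lt_window, h.bottleneck.nonneg, h.radius_nonneg]
  have hn := h.window_le
  have hn' := h.add_window_le
  have h₁ := h.dist_mem_Icc hX x (s := n' + L) (by linarith)
  have h₂ := h.dist_mem_Icc hX x (s := n' - L) (by linarith)
  have h₃ := h.dist_mem_Icc hX (w⁻¹ • x) (s := n + L) (by linarith)
  have h₄ := h.dist_mem_Icc hX (w⁻¹ • x) (s := n - L) (by linarith)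
  have hleft := (abs_dist_sub_le (w • γ (n - L)) (γ (n' - L)) x).trans h.shift_left
  have hright := (abs_dist_sub_le (w • γ (n + L)) (γ (n' + L)) x).trans h.shift_right
  rw [dist_comm _ x, dist_comm _ x, ← dist_inv_smul_left, abs_le] at hleft hright
  rw [abs_le]
  constructor <;> linarith [h₁.1, h₁.2, h₂.1, h₂.2, h₃.1, h₃.2, h₄.1, h₄.2, hleft.1, hleft.2,
    hright.1, hright.2]

lemma le_of_le (hX : GeodesicSpace X) (h : RecurrentRay w y₀ γ τ D R L n n')
    (hx : τ x ≤ n' - L) : τ (w⁻¹ • x) ≤ n - L + (2 * D + 2 * R) := by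
  have := (abs_le.1 (h.abs_shift_sub_shift_le hX x)).2
  rw [abs_of_nonneg (by linarith [h.lt_window, h.bottleneck.nonneg, h.radius_nonneg]),
    abs_of_nonneg (by linarith)] at this
  rcases abs_cases (n + L - τ (w⁻¹ • x)) with h₁ | h₁ <;>
    rcases abs_cases (n - L - τ (w⁻¹ • x)) with h₂ | h₂ <;>
        linarith [h.lt_window, h.bottleneck.nonneg, h.radius_nonneg]

lemma le_of_ge (hX : GeodesicSpace X) (h : RecurrentRay w y₀ γ τ D R L n n')
    (hx : n + L ≤ τ (w⁻¹ • x)) : n' + L - (2 * D + 2 * R) ≤ τ x := by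
  have := (abs_le.1 (h.abs_shift_sub_shift_le hX x)).2
  rw [abs_of_nonpos (a := n + L - _) (by linarith), abs_of_nonpos (a := n - L - _)
    (by linarith [h.lt_window, h.bottleneck.nonneg, h.radius_nonneg])] at this
  rcases abs_cases (n' + L - τ x) with h₁ | h₁ <;>
    rcases abs_cases (n' - L - τ x) with h₂ | h₂ <;>
        linarith [h.lt_window, h.bottleneck.nonneg, h.radius_nonneg]

lemma le_of_lt (hX : GeodesicSpace X) (h : RecurrentRay w y₀ γ τ D R L n n')
    (hx : τ ((w ^ k)⁻¹ • x) ≤ n' - L) (hkl : k < l) :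
    τ ((w ^ l)⁻¹ • x) ≤ n - L + (2 * D + 2 * R) := by
  induction l, Int.add_one_le_of_lt hkl using Int.leInduction with
  | base =>
    rw [zpow_add_one, mul_inv_rev, mul_smul]
    exact h.le_of_le hX hx
  | succ l hl ih =>
    rw [zpow_add_one, mul_inv_rev, mul_smul]
    refine h.le_of_le hX ((ih (by omega)).trans ?_)
    linarith [h.lt_window, h.add_window_le, h.bottleneck.nonneg, h.radius_nonneg]

lemma ge_of_lt (hX : GeodesicSpace X) (h : RecurrentRay w y₀ γ τ D R L n n')
    (hx : n + L ≤ τ ((w ^ l)⁻¹ • x)) (hkl : k < l) :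
    n' + L - (2 * D + 2 * R) ≤ τ ((w ^ k)⁻¹ • x) := by
  induction k, Int.le_sub_one_of_lt hkl using Int.leInductionDown with
  | base =>
    rw [← sub_add_cancel l 1, zpow_add_one, mul_inv_rev, mul_smul] at hx
    exact h.le_of_ge hX hx
  | pred k hk ih =>
    have hk' := ih (by omega)
    rw [← sub_add_cancel k 1, zpow_add_one, mul_inv_rev, mul_smul] at hk'
    refine h.le_of_ge hX (le_trans ?_ hk')
    linarith [h.lt_window, h.add_window_le, h.bottleneck.nonneg, h.radius_nonneg]

lemma not_isOfFinOrder (hX : GeodesicSpace X) (h : RecurrentRay w y₀ γ τ D R L n n') :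
    ¬ IsOfFinOrder w := by
  rw [isOfFinOrder_iff_pow_eq_one]
  rintro ⟨k, hk, hwk⟩
  have hn : 0 ≤ n := by
    linarith [h.lt_window, h.window_le, h.bottleneck.nonneg, h.radius_nonneg]
  have hτ : |n - τ y₀| ≤ R + 2 * D := by
    linarith [(h.dist_mem_Icc hX y₀ hn).1, h.dist_le, dist_nonneg (x := y₀) (y := γ (τ y₀))]
  have hshift := h.le_of_lt hX (x := y₀) (k := 0) (l := k) (by
    rw [zpow_zero, inv_one, one_smul]
    linarith [(abs_le.1 hτ).1, h.lt_window, h.add_window_le, h.bottleneck.nonneg,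
      h.radius_nonneg]) (by exact_mod_cast hk)
  rw [zpow_natCast, hwk, inv_one, one_smul] at hshift
  linarith [(abs_le.1 hτ).2, h.lt_window, h.bottleneck.nonneg, h.radius_nonneg]

lemma lt_of_mem_projSet (hX : GeodesicSpace X) (h : RecurrentRay w y₀ γ τ D R L n n')
    (ha : w ^ a • y₀ ∈ projSet (cyclicOrbit w y₀) x) (hk : a < k) :
    τ ((w ^ k)⁻¹ • x) < n + L := by
  by_contra! hτ
  refine (h.lt_of_dist_le hX ?_).not_ge (h.ge_of_lt hX hτ hk)
  rw [dist_inv_smul_left, dist_inv_smul_left, ← mul_smul, ← zpow_add_one]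
  exact ha.2 _ (zpow_smul_mem_cyclicOrbit w y₀ _)

lemma gt_of_mem_projSet (hX : GeodesicSpace X) (h : RecurrentRay w y₀ γ τ D R L n n')
    (ha : w ^ a • y₀ ∈ projSet (cyclicOrbit w y₀) x) (hk : k + 2 ≤ a) :
    n' - L < τ ((w ^ k)⁻¹ • x) := by
  by_contra! hτ
  refine (h.gt_of_dist_le hX ?_).not_ge (h.le_of_lt hX hτ (l := a - 1) (by omega))
  rw [dist_inv_smul_left, dist_inv_smul_left, ← mul_smul, ← zpow_add_one, sub_add_cancel]
  exact ha.2 _ (zpow_smul_mem_cyclicOrbit w y₀ _)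

lemma exists_near_zpow (hX : GeodesicSpace X) (h : RecurrentRay w y₀ γ τ D R L n n')
    (ha : w ^ a • y₀ ∈ projSet (cyclicOrbit w y₀) x)
    (hb : w ^ b • y₀ ∈ projSet (cyclicOrbit w y₀) y) (hak : a + 2 ≤ k) (hkb : k + 2 ≤ b)
    (hα : IsGeodesicSegment α S x y) :
    ∃ s ∈ Icc 0 S, dist (α s) (w ^ k • y₀) ≤ 12 * D + 3 + R := by
  have hD := h.bottleneck.nonneg
  have hR := h.radius_nonneg
  have hL := h.lt_window
  have hn' := h.add_window_le
  have hx := h.le_of_lt hX (l := k)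
    ((h.lt_of_mem_projSet hX ha (lt_add_one a)).le.trans (by linarith)) (by omega)
  have hy := h.gt_of_mem_projSet hX hb hkb
  obtain ⟨s, hs, hd⟩ := h.bottleneck.exists_near_ray hX h.geodesicOn (h.nonneg _)
    (h.mem_projSet _) (h.mem_projSet _) (r := n) (by linarith) (by linarith) (by linarith)
    (hα.smul (w ^ k)⁻¹)
  refine ⟨s, hs, ?_⟩
  rw [← dist_inv_smul_left]
  linarith [dist_triangle_right ((w ^ k)⁻¹ • α s) y₀ (γ n), h.dist_le]

lemma bottleneck_cyclicOrbit [ProperSpace X] [ProperlyDiscontinuousSMul G X]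
    (hX : GeodesicSpace X) (h : RecurrentRay w y₀ γ τ D R L n n') :
    Bottleneck (12 * D + 3 + R + 3 * dist y₀ (w • y₀)) (cyclicOrbit w y₀) := by
  have hD := h.bottleneck.nonneg
  have hR := h.radius_nonneg
  refine ⟨by positivity, projSet_cyclicOrbit_nonempty (h.not_isOfFinOrder hX) y₀, ?_⟩
  rintro x y _ _ hp hq hpq α S hα
  obtain ⟨a, rfl⟩ := hp.1
  obtain ⟨b, rfl⟩ := hq.1
  have hfar : 4 ≤ (b - a).natAbs := by
    by_contra! hlt
    have hle : ((b - a).natAbs : ℝ) ≤ 3 := by exact_mod_cast Nat.le_of_lt_succ hlt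
    have := (dist_zpow_smul_zpow_smul w y₀ a b).trans_le (dist_zpow_smul_le w y₀ (b - a))
    linarith [mul_le_mul_of_nonneg_right hle (dist_nonneg (x := y₀) (y := w • y₀))]
  obtain ⟨c, hc, s, hs, hsc⟩ : ∃ c : ℤ, (c - a).natAbs = 2 ∧
      ∃ s ∈ Icc 0 S, dist (α s) (w ^ c • y₀) ≤ 12 * D + 3 + R := by
    rcases le_total a b with hab | hab
    · exact ⟨a + 2, by omega, h.exists_near_zpow hX hp hq le_rfl (by omega) hα⟩
    · obtain ⟨s, hs, hsc⟩ :=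
        h.exists_near_zpow hX hq hp (k := a - 2) (by omega) (by omega) hα.reverse
      exact ⟨a - 2, by omega, S - s, ⟨by linarith [hs.2], by linarith [hs.1]⟩, hsc⟩
  refine ⟨s, hs, ?_⟩
  have hac := (dist_zpow_smul_zpow_smul w y₀ a c).trans_le (dist_zpow_smul_le w y₀ (c - a))
  rw [hc, Nat.cast_ofNat] at hac
  linarith [dist_triangle_right (α s) (w ^ a • y₀) (w ^ c • y₀),
    dist_nonneg (x := y₀) (y := w • y₀)]

end RecurrentRay

variable [IsIsometricSMul G X] [ProperSpace X] [ProperlyDiscontinuousSMul G X]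

lemma exists_recurrent_times {x₀ : X} {γ : ℝ → X} {g : ℝ → G} {R L : ℝ}
    (hγ : GeodesicOn (Ici 0) γ) (hg : ∀ s, dist (γ s) (g s • x₀) ≤ R) (hL : 0 ≤ L) :
    ∃ n n' : ℝ, L ≤ n ∧ n + 3 * L ≤ n' ∧ g n' * (g n)⁻¹ * g (n - L) = g (n' - L) ∧
      g n' * (g n)⁻¹ * g (n + L) = g (n' + L) := by
  have hF := finite_setOf_dist_smul_le (G := G) x₀ x₀ (2 * R + L)
  have hmem {s s' : ℝ} (hs : 0 ≤ s) (hs' : 0 ≤ s') (hss' : |s' - s| ≤ L) :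
      dist (((g s)⁻¹ * g s') • x₀) x₀ ≤ 2 * R + L := by
    rw [mul_smul, dist_inv_smul_left, dist_comm]
    linarith [dist_triangle4_left (γ s) (γ s') (g s • x₀) (g s' • x₀), hγ s hs s' hs', hg s, hg s']
  let N : ℕ → ℝ := fun j => 3 * L * (j + 1)
  have hN (j : ℕ) : L ≤ N j := by
    have : 0 ≤ 3 * L * j := by positivity
    simp only [N]
    linarith
  have hmaps : MapsTo (fun j => ((g (N j))⁻¹ * g (N j - L), (g (N j))⁻¹ * g (N j + L))) univ
      ({h : G | dist (h • x₀) x₀ ≤ 2 * R + L} ×ˢ {h : G | dist (h • x₀) x₀ ≤ 2 * R + L}) :=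
    fun j _ => by
      have := hN j
      exact ⟨hmem (by linarith) (by linarith) (by simp [abs_of_nonneg hL]),
        hmem (by linarith) (by linarith) (by simp [abs_of_nonneg hL])⟩
  obtain ⟨i, -, j, -, hne, heq⟩ := infinite_univ.exists_ne_map_eq_of_mapsTo hmaps (hF.prod hF)
  wlog hij : i < j generalizing i j
  · exact this j i hne.symm heq.symm (hne.symm.lt_of_le (not_lt.1 hij))
  rw [Prod.mk.injEq] at heq
  refine ⟨N i, N j, hN i, ?_, by rw [mul_assoc, heq.1, mul_inv_cancel_left],
    by rw [mul_assoc, heq.2, mul_inv_cancel_left]⟩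
  have hij' : (i : ℝ) + 1 ≤ j := by exact_mod_cast hij
  simp only [N]
  nlinarith

theorem exists_bottleneck_cyclicOrbit (hX : GeodesicSpace X) {x₀ : X} {R D : ℝ}
    (hR : ∀ y : X, ∃ g : G, dist y (g • x₀) ≤ R) {γ : ℝ → X} (hγ : GeodesicOn (Ici 0) γ)
    (hA : Bottleneck D (γ '' Ici 0)) :
    ∃ (w : G) (D' : ℝ), ¬ IsOfFinOrder w ∧ Bottleneck D' (cyclicOrbit w x₀) := by
  choose g hg using fun s => hR (γ s)
  have hR₀ : 0 ≤ R := dist_nonneg.trans (hg 0)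
  have hD := hA.nonneg
  obtain ⟨n, n', hn, hn', hleft, hright⟩ :=
    exists_recurrent_times hγ hg (L := 8 * D + 4 * R + 1) (by positivity)
  have hτ (x : X) : ∃ t, 0 ≤ t ∧ γ t ∈ projSet (γ '' Ici 0) x := by
    obtain ⟨p, hp⟩ := hA.projSet_nonempty x
    obtain ⟨t, ht, rfl⟩ := hp.1
    exact ⟨t, ht, hp⟩
  choose τ hτ hproj using hτ
  have hshift {s s' : ℝ} (h : g n' * (g n)⁻¹ * g s = g s') :
      dist ((g n' * (g n)⁻¹) • γ s) (γ s') ≤ 2 * R := by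
    have hs : dist ((g n' * (g n)⁻¹) • γ s) (g s' • x₀) ≤ R := by
      rw [← h, mul_smul _ (g s), dist_smul]
      exact hg s
    linarith [dist_triangle_right ((g n' * (g n)⁻¹) • γ s) (γ s') (g s' • x₀), hg s']
  have hrec : RecurrentRay (g n' * (g n)⁻¹) (g n • x₀) γ τ D R (8 * D + 4 * R + 1) n n' :=
    { geodesicOn := hγ
      bottleneck := hA
      nonneg := hτ
      mem_projSet := hproj
      lt_window := lt_add_one _
      window_le := hn
      add_window_le := hn'
      dist_le := by rw [dist_comm]; exact hg n
      dist_smul_le := by rw [smul_smul, inv_mul_cancel_right, dist_comm]; exact hg n'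
      shift_left := hshift hleft
      shift_right := hshift hright }
  have hconj : (g n)⁻¹ • cyclicOrbit (g n' * (g n)⁻¹) (g n • x₀) =
      cyclicOrbit ((g n)⁻¹ * g n') x₀ := by
    rw [smul_cyclicOrbit, inv_smul_smul, inv_inv, mul_assoc, inv_mul_cancel_right]
  refine ⟨(g n)⁻¹ * g n', _, fun hfin => hrec.not_isOfFinOrder hX ?_,
    hconj ▸ (hrec.bottleneck_cyclicOrbit hX).smul (g n)⁻¹⟩
  exact (isConj_iff.2 ⟨g n, by group⟩ : IsConj ((g n)⁻¹ * g n') _).isOfFinOrder hfin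

end Axis

/-! ### Elements commensurating the axis -/

section Commensurating

variable {G X : Type*} [Group G] {w g : G}

/-- `g` conjugates a nontrivial power of `w` to a nontrivial power of `w`. -/
def Commensurates (w g : G) : Prop :=
  ∃ i j : ℤ, i ≠ 0 ∧ j ≠ 0 ∧ SemiconjBy g (w ^ j) (w ^ i)

lemma Commensurates.inv (h : Commensurates w g) : Commensurates w g⁻¹ := by
  obtain ⟨i, j, hi, hj, h⟩ := h
  exact ⟨j, i, hj, hi, h.inv_symm_left⟩

lemma commensurates_of_eq (hw : ¬ IsOfFinOrder w) {a b a' b' : ℤ}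
    (h : (w ^ a)⁻¹ * g * w ^ b = (w ^ a')⁻¹ * g * w ^ b') (ha : a ≠ a') : Commensurates w g := by
  have hsemi : g * w ^ (b - b') = w ^ (a - a') * g := by
    rw [mul_assoc, inv_mul_eq_iff_eq_mul] at h
    rw [zpow_sub, ← mul_assoc, h, zpow_sub]
    group
  refine ⟨a - a', b - b', sub_ne_zero.2 ha, fun hb => ha ?_, hsemi⟩
  rw [hb, zpow_zero, mul_one, right_eq_mul] at hsemi
  exact sub_eq_zero.1 (injective_zpow_iff_not_isOfFinOrder.2 hw (hsemi.trans (zpow_zero w).symm))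

variable [MetricSpace X] [MulAction G X] [IsIsometricSMul G X] {x₀ : X}

lemma Commensurates.exists_near (h : Commensurates w g) (x₀ : X) :
    ∃ R, 0 ≤ R ∧ ∀ a ∈ cyclicOrbit w x₀, ∃ b ∈ cyclicOrbit w x₀, dist (g • a) b ≤ R := by
  obtain ⟨i, j, -, hj, h⟩ := h
  refine ⟨∑ r ∈ Finset.range j.natAbs, dist (g • w ^ r • x₀) x₀,
    Finset.sum_nonneg fun _ _ => dist_nonneg, ?_⟩
  rintro _ ⟨k, rfl⟩
  refine ⟨_, zpow_smul_mem_cyclicOrbit w x₀ (i * (k / j)), ?_⟩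
  obtain ⟨r, hr⟩ := Int.eq_ofNat_of_zero_le (Int.emod_nonneg k hj)
  have hrj : r < j.natAbs := by
    have := Int.emod_lt_abs k hj
    rw [hr, Int.abs_eq_natAbs] at this
    exact_mod_cast this
  have hk : g * w ^ k = w ^ (i * (k / j)) * (g * w ^ r) := by
    nth_rw 1 [← Int.mul_ediv_add_emod k j]
    rw [hr, zpow_add, zpow_natCast, zpow_mul, zpow_mul, ← mul_assoc, (h.zpow_right _).eq,
      mul_assoc]
  rw [smul_smul, hk, mul_smul, mul_smul, dist_smul]
  exact Finset.single_le_sum (f := fun r => dist (g • w ^ r • x₀) x₀)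
    (fun _ _ => dist_nonneg) (Finset.mem_range.2 hrj)

variable [ProperSpace X] [ProperlyDiscontinuousSMul G X]

lemma Commensurates.exists_dist_le (h : Commensurates w g) (hX : GeodesicSpace X)
    (hw : ¬ IsOfFinOrder w) {D : ℝ} (hA : Bottleneck D (cyclicOrbit w x₀)) :
    ∃ a ∈ cyclicOrbit w x₀, ∃ b ∈ cyclicOrbit w x₀, dist (g • b) a ≤ 3 * D := by
  obtain ⟨i, j, hi, -, h⟩ := h
  obtain ⟨p, hp⟩ := hA.projSet_nonempty (g • x₀)
  obtain ⟨n, hn⟩ := (((tendsto_dist_zpow_smul hw p p).comp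
    (mul_right_injective₀ hi).tendsto_cofinite).eventually_gt_atTop D).exists
  have hp' : w ^ (i * n) • p ∈ projSet (cyclicOrbit w x₀) (g • w ^ (j * n) • x₀) := by
    rw [← zpow_smul_cyclicOrbit w x₀ (i * n), smul_smul, zpow_mul, zpow_mul, (h.zpow_right n).eq,
      mul_smul, smul_mem_projSet_smul]
    exact hp
  obtain ⟨α, S, hα⟩ := hX (g • x₀) (g • w ^ (j * n) • x₀)
  obtain ⟨s, hs, hsp⟩ := hA.exists_near_left hp hp' hn hα
  obtain ⟨_, hr⟩ := (hA.smul g).projSet_nonempty (α s)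
  have hsr := (hA.smul g).quasiconvex hX (hα.dist_add_dist hs)
    (smul_mem_smul_set (self_mem_cyclicOrbit w x₀))
    (smul_mem_smul_set (zpow_smul_mem_cyclicOrbit w x₀ _)) (dist_self _).le (dist_self _).le hr
  obtain ⟨b, hb, rfl⟩ := hr.1
  refine ⟨p, hp.1, b, hb, ?_⟩
  linarith [dist_triangle_left (g • b) p (α s)]

/-! ### Existence of transverse translates -/

lemma exists_near_zpow_of_dense (hw : ¬ IsOfFinOrder w) {R : ℝ}
    (hR : ∀ y : X, ∃ k : ℤ, dist y (w ^ k • x₀) ≤ R) :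
    ∃ K, 0 ≤ K ∧ ∀ {α : ℝ → X} {S : ℝ} {x y : X} {i j m : ℤ}, IsGeodesicSegment α S x y →
      dist x (w ^ i • x₀) ≤ R → dist y (w ^ j • x₀) ≤ R → m ∈ uIcc i j →
      ∃ u ∈ Icc 0 S, dist (α u) (w ^ m • x₀) ≤ K := by
  have hR₀ : 0 ≤ R := dist_nonneg.trans (hR x₀).choose_spec
  obtain ⟨B, hB₀, hB⟩ := exists_dist_zpow_smul_le_of_mem_Icc hw x₀ (2 * (R + 1))
  refine ⟨R + 1 + B, by positivity, fun {α S x y i j m} hα hx hy hm => ?_⟩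
  set P : Set ℤ → Set X := fun I => (fun k : ℤ => w ^ k • x₀) '' I
  have near {I : Set ℤ} {z : X} {k : ℤ} (hz : dist z (w ^ k • x₀) ≤ R) (hk : k ∈ I) :
      ∃ a ∈ P I, dist z a < R + 1 := ⟨_, mem_image_of_mem _ hk, hz.trans_lt (lt_add_one R)⟩
  have hcover (u : ℝ) : ∃ a ∈ P (Iic m) ∪ P (Ici m), dist (α u) a < R + 1 := by
    obtain ⟨k, hk⟩ := hR (α u)
    rw [← image_union, Iic_union_Ici]
    exact near hk (mem_univ k)
  have hα₀ : α 0 = x := hα.2.1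
  have hαS : α S = y := hα.2.2.1
  have hcont := hα.2.2.2.continuousOn
  rw [← uIcc_of_le hα.1] at hcont ⊢
  obtain ⟨u, hu, ⟨_, ⟨k, hk, rfl⟩, huk⟩, _, ⟨l, hl, rfl⟩, hul⟩ : ∃ u ∈ uIcc 0 S,
      (∃ a ∈ P (Iic m), dist (α u) a < R + 1) ∧ ∃ b ∈ P (Ici m), dist (α u) b < R + 1 := by
    rcases mem_uIcc.1 hm with ⟨him, hmj⟩ | ⟨hjm, hmi⟩
    · exact exists_dist_lt_of_mem_uIcc hcont (fun u _ => hcover u) (near (hα₀ ▸ hx) him)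
        (near (hαS ▸ hy) hmj)
    · rw [uIcc_comm] at hcont ⊢
      exact exists_dist_lt_of_mem_uIcc hcont (fun u _ => hcover u) (near (hαS ▸ hy) hjm)
        (near (hα₀ ▸ hx) hmi)
  have hkm := hB k l m ⟨hk, hl⟩
    (by linarith [dist_triangle_left (w ^ k • x₀) (w ^ l • x₀) (α u)])
  exact ⟨u, hu, by linarith [dist_triangle (α u) (w ^ k • x₀) (w ^ m • x₀)]⟩

lemma gromovHyperbolic_of_dense (hw : ¬ IsOfFinOrder w) {R : ℝ}
    (hR : ∀ y : X, ∃ k : ℤ, dist y (w ^ k • x₀) ≤ R) : GromovHyperbolic X := by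
  obtain ⟨K, hK₀, hK⟩ := exists_near_zpow_of_dense hw hR
  have hR₀ : 0 ≤ R := dist_nonneg.trans (hR x₀).choose_spec
  refine ⟨R + K, by positivity, fun x y z γ₁ γ₂ γ₃ T₁ T₂ T₃ h₁ h₂ h₃ s hs => ?_⟩
  obtain ⟨i, hi⟩ := hR x
  obtain ⟨j, hj⟩ := hR y
  obtain ⟨k, hk⟩ := hR z
  obtain ⟨a, ha⟩ := hR (γ₁ s)
  have hcases : a ∈ uIcc j k ∨ a ∈ uIcc k i ∨ j ∈ uIcc i a ∨ i ∈ uIcc a j := by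
    simp only [mem_uIcc]
    omega
  rcases hcases with h | h | h | h
  · obtain ⟨u, hu, hd⟩ := hK h₂ hj hk h
    exact ⟨γ₂ u, Or.inl ⟨u, hu, rfl⟩, by linarith [dist_triangle_right (γ₁ s) (γ₂ u) (w ^ a • x₀)]⟩
  · obtain ⟨u, hu, hd⟩ := hK h₃ hk hi h
    exact ⟨γ₃ u, Or.inr ⟨u, hu, rfl⟩, by linarith [dist_triangle_right (γ₁ s) (γ₃ u) (w ^ a • x₀)]⟩
  · obtain ⟨u, hu, hd⟩ := hK (h₁.initial hs) hi ha h
    refine ⟨y, Or.inl ⟨0, ⟨le_rfl, h₂.1⟩, h₂.2.1⟩, ?_⟩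
    linarith [h₁.dist_right hs, h₁.dist_right (s := u) ⟨hu.1, hu.2.trans hs.2⟩, hu.2,
      dist_triangle_right (γ₁ u) y (w ^ j • x₀)]
  · obtain ⟨u, hu, hd⟩ := hK (h₁.2.2.1 ▸ h₁.subsegment hs.1 hs.2 le_rfl) ha hj h
    refine ⟨x, Or.inr ⟨T₃, ⟨h₃.1, le_rfl⟩, h₃.2.2.1⟩, ?_⟩
    rw [dist_comm]
    linarith [h₁.dist_left hs, h₁.dist_left (s := s + u) ⟨by linarith [hs.1, hu.1],
      by linarith [hu.2]⟩, hu.1, dist_triangle_right x (γ₁ (s + u)) (w ^ i • x₀)]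

lemma exists_not_commensurates (hX : GeodesicSpace X) (hnh : ¬ GromovHyperbolic X)
    (hw : ¬ IsOfFinOrder w) {D R : ℝ} (hA : Bottleneck D (cyclicOrbit w x₀))
    (hR : ∀ y : X, ∃ g : G, dist y (g • x₀) ≤ R) : ∃ g : G, ¬ Commensurates w g := by
  by_contra! hcomm
  choose ρ hρ₀ hρ using fun g => (hcomm g).exists_near x₀
  have hF : {f : G | dist (f • x₀) x₀ ≤ 3 * D}.Finite := finite_setOf_dist_smul_le x₀ x₀ _
  refine hnh (gromovHyperbolic_of_dense hw (x₀ := x₀) (R := R + ∑ f ∈ hF.toFinset, ρ f)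
    fun y => ?_)
  obtain ⟨g, hg⟩ := hR y
  obtain ⟨_, ⟨a, rfl⟩, _, ⟨b, rfl⟩, hab⟩ := (hcomm g).exists_dist_le hX hw hA
  set f := (w ^ a)⁻¹ * g * w ^ b with hf
  have hfF : f ∈ hF.toFinset := by
    rw [hF.mem_toFinset, mem_ofPred_eq, hf, mul_assoc, mul_smul, dist_inv_smul_left, mul_smul]
    exact hab
  obtain ⟨_, ⟨l, rfl⟩, hl⟩ := hρ f _ (zpow_smul_mem_cyclicOrbit w x₀ (-b))
  refine ⟨a + l, ?_⟩
  have hgl : dist (g • x₀) (w ^ (a + l) • x₀) ≤ ρ f := by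
    rw [smul_smul, hf, zpow_neg, mul_inv_cancel_right, mul_smul, dist_inv_smul_left, smul_smul,
      ← zpow_add] at hl
    exact hl
  linarith [dist_triangle y (g • x₀) (w ^ (a + l) • x₀),
    Finset.single_le_sum (f := ρ) (fun f _ => hρ₀ f) hfF]

-- Pigeonhole along the geodesic: the elements moving a nearby point of `g • ⟨w⟩ • x₀` to a nearby
-- point of `⟨w⟩ • x₀`, both translated back to `x₀`, take finitely many values.
lemma exists_commensurates_of_near (hw : ¬ IsOfFinOrder w) (x₀ : X) {r : ℝ} (hr : 0 ≤ r) :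
    ∃ ℓ, 0 ≤ ℓ ∧ ∀ {g : G} {β : ℝ → X} {s t : ℝ}, GeodesicOn (Icc s t) β → s + ℓ ≤ t →
      (∀ u ∈ Icc s t, ∃ a ∈ cyclicOrbit w x₀, dist (β u) a ≤ r) →
      (∀ u ∈ Icc s t, ∃ b ∈ g • cyclicOrbit w x₀, dist (β u) b ≤ r) → Commensurates w g := by
  have hF : {f : G | dist (f • x₀) x₀ ≤ 2 * r}.Finite := finite_setOf_dist_smul_le x₀ x₀ _
  refine ⟨hF.toFinset.card * (2 * r + 1), by positivity, fun {g β s t} hβ hst ha hb => ?_⟩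
  have ha' : ∀ u ∈ Icc s t, ∃ k : ℤ, dist (β u) (w ^ k • x₀) ≤ r := fun u hu => by
    obtain ⟨_, ⟨k, rfl⟩, hk⟩ := ha u hu
    exact ⟨k, hk⟩
  have hb' : ∀ u ∈ Icc s t, ∃ k : ℤ, dist (β u) (g • w ^ k • x₀) ≤ r := fun u hu => by
    obtain ⟨_, ⟨_, ⟨k, rfl⟩, rfl⟩, hk⟩ := hb u hu
    exact ⟨k, hk⟩
  choose! a ha using ha'
  choose! b hb using hb'
  set u : ℕ → ℝ := fun n => s + n * (2 * r + 1)
  have hu {n : ℕ} (hn : n ∈ Finset.range (hF.toFinset.card + 1)) : u n ∈ Icc s t := by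
    have hn' : (n : ℝ) ≤ hF.toFinset.card := by exact_mod_cast Finset.mem_range_succ_iff.1 hn
    exact ⟨le_add_of_nonneg_right (by positivity), (by simp only [u]; gcongr : u n ≤ _).trans hst⟩
  obtain ⟨m, hm, n, hn, hmn, hmap⟩ := Finset.exists_ne_map_eq_of_card_lt_of_maps_to
    (s := Finset.range (hF.toFinset.card + 1)) (t := hF.toFinset) (by simp)
    (f := fun n => (w ^ a (u n))⁻¹ * g * w ^ b (u n)) fun n hn => by
      rw [Finset.mem_coe, hF.mem_toFinset, mem_ofPred_eq]
      beta_reduce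
      rw [mul_assoc, mul_smul, dist_inv_smul_left, mul_smul]
      linarith [dist_triangle_left (g • w ^ b (u n) • x₀) (w ^ a (u n) • x₀) (β (u n)),
        ha _ (hu hn), hb _ (hu hn)]
  refine commensurates_of_eq hw hmap fun hamn => ?_
  have hclose : dist (β (u m)) (β (u n)) ≤ 2 * r := by
    linarith [dist_triangle_right (β (u m)) (β (u n)) (w ^ a (u n) • x₀), hamn ▸ ha _ (hu hm),
      ha _ (hu hn)]
  have hmn' : (1 : ℝ) ≤ |(n : ℝ) - m| := by
    exact_mod_cast Int.one_le_abs (sub_ne_zero.2 (Nat.cast_injective.ne hmn.symm))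
  have hdiff : u n - u m = (n - m) * (2 * r + 1) := by
    simp only [u]
    ring
  rw [hβ _ (hu hm) _ (hu hn), hdiff, abs_mul, abs_of_pos (a := 2 * r + 1) (by positivity)] at hclose
  nlinarith

lemma exists_projection_bound (hX : GeodesicSpace X) (hw : ¬ IsOfFinOrder w) {D : ℝ}
    (hA : Bottleneck D (cyclicOrbit w x₀)) :
    ∃ K, 0 ≤ K ∧ ∀ {g : G}, ¬ Commensurates w g → ∀ y ∈ g • cyclicOrbit w x₀,
      ∀ y' ∈ g • cyclicOrbit w x₀, ∀ p ∈ projSet (cyclicOrbit w x₀) y,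
      ∀ p' ∈ projSet (cyclicOrbit w x₀) y', dist p p' ≤ K := by
  have hD := hA.nonneg
  obtain ⟨ℓ, hℓ, hcomm⟩ := exists_commensurates_of_near hw x₀ (r := 4 * D) (by positivity)
  refine ⟨ℓ + 2 * D, by positivity, fun {g} hg y hy y' hy' p hp p' hp' => ?_⟩
  by_contra! hpp'
  obtain ⟨β, S, hβ⟩ := hX y y'
  obtain ⟨s, hs, hsp⟩ := hA.exists_near_left hp hp' (by linarith) hβ
  obtain ⟨t, ht, htp'⟩ := hA.exists_near_right hp hp' (by linarith) hβ
  have hsub : uIcc s t ⊆ Icc 0 S := ordConnected_Icc.uIcc_subset hs ht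
  refine hg (hcomm (β := β) (s := min s t) (t := max s t) (hβ.2.2.2.mono hsub) ?_
    (fun u hu => ?_) fun u hu => ?_)
  · have := hβ.2.2.2 s hs t ht
    rw [← max_sub_min_eq_abs] at this
    linarith [dist_triangle4_left (β s) (β t) p p']
  · obtain ⟨a, ha⟩ := hA.projSet_nonempty (β u)
    have := hA.quasiconvex hX (hβ.2.2.2.dist_add_dist hs (hsub hu) ht hu) hp.1 hp'.1 hsp htp' ha
    exact ⟨a, ha.1, by linarith⟩
  · obtain ⟨b, hb⟩ := (hA.smul g).projSet_nonempty (β u)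
    have := (hA.smul g).quasiconvex hX (hβ.dist_add_dist (hsub hu)) hy hy' (dist_self y).le
      (dist_self y').le hb
    exact ⟨b, hb.1, by linarith⟩

lemma exists_junction_of_not_commensurates (hX : GeodesicSpace X) (hw : ¬ IsOfFinOrder w)
    {D : ℝ} (hA : Bottleneck D (cyclicOrbit w x₀)) :
    ∃ K, 0 ≤ K ∧ ∀ {g : G}, ¬ Commensurates w g → ∃ i j : ℤ,
      Junction K (cyclicOrbit w x₀) (g • cyclicOrbit w x₀) (w ^ i • x₀) (g • w ^ j • x₀) := by
  obtain ⟨K, hK₀, hK⟩ := exists_projection_bound hX hw hA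
  have hleft {g : G} (hg : ¬ Commensurates w g) : ∃ i : ℤ, ∀ y ∈ g • cyclicOrbit w x₀,
      ProjectsNear (cyclicOrbit w x₀) (w ^ i • x₀) K y := by
    obtain ⟨_, hp⟩ := hA.projSet_nonempty (g • x₀)
    obtain ⟨i, rfl⟩ := hp.1
    exact ⟨i, fun y hy q hq => hK hg y hy _ (smul_mem_smul_set (self_mem_cyclicOrbit w x₀)) q hq
      _ hp⟩
  refine ⟨K, hK₀, fun {g} hg => ?_⟩
  obtain ⟨i, hi⟩ := hleft hg
  obtain ⟨j, hj⟩ := hleft fun h => hg (inv_inv g ▸ h.inv)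
  refine ⟨i, j, hi, fun y hy => ?_⟩
  simpa only [smul_inv_smul] using (hj (g⁻¹ • y) (smul_mem_smul_set hy)).smul g

/-! ### Comparing the projections of a point and of its translates -/

lemma exists_dist_proj_comparison (hX : GeodesicSpace X) (hw : ¬ IsOfFinOrder w) {D : ℝ}
    (hA : Bottleneck D (cyclicOrbit w x₀)) (s : G) :
    ∃ E, ∀ {x p p' : X}, p ∈ projSet (cyclicOrbit w x₀) x →
      p' ∈ projSet (cyclicOrbit w x₀) (s • x) →
      dist x₀ p ≤ E ∨ dist x₀ p' ≤ E ∨ |dist x₀ p - dist x₀ p'| ≤ E := by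
  by_cases hs : Commensurates w s
  · obtain ⟨R, -, hR⟩ := hs.exists_near x₀
    obtain ⟨R', -, hR'⟩ := hs.inv.exists_near x₀
    refine ⟨2 * R + R' + 2 * D + dist x₀ (s • x₀), fun {x p p'} hp hp' => Or.inr (Or.inr ?_)⟩
    obtain ⟨a, ha, hpa⟩ := hR p hp.1
    obtain ⟨b, hb, hpb⟩ := hR' p' hp'.1
    have hpp' := hA.dist_proj_le_of_near hX hp' ((smul_mem_projSet_smul s).2 hp) ha hpa
      (smul_mem_smul_set hb) (dist_inv_smul_left s p' b ▸ hpb)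
    have hsp := dist_smul s x₀ p
    rw [abs_le]
    constructor
    · linarith [dist_triangle4 x₀ (s • x₀) (s • p) p', dist_comm (s • p) p']
    · linarith [dist_triangle4 (s • x₀) x₀ p' (s • p), dist_comm (s • x₀) x₀]
  · obtain ⟨K, -, hK⟩ := exists_junction_of_not_commensurates hX hw hA
    obtain ⟨i, j, hJ⟩ := hK hs
    refine ⟨dist x₀ (w ^ i • x₀) + dist x₀ (w ^ j • x₀) + K + 3 * D, fun {x p p'} hp hp' => ?_⟩
    rcases lt_or_ge (K + D) (dist p' (w ^ i • x₀)) with h | h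
    · have := hA.projectsNear_of_lt_dist hX (hA.smul s) hJ hp' h ((smul_mem_projSet_smul s).2 hp)
      rw [mem_closedBall, dist_smul] at this
      left
      linarith [dist_triangle_right x₀ p (w ^ j • x₀), dist_nonneg (x := x₀) (y := w ^ i • x₀)]
    · right
      left
      linarith [dist_triangle_right x₀ p' (w ^ i • x₀), hA.nonneg,
        dist_nonneg (x := x₀) (y := w ^ j • x₀)]

lemma exists_stabilizer_dist_proj_comparison (hX : GeodesicSpace X) (hw : ¬ IsOfFinOrder w)
    {D : ℝ} (hA : Bottleneck D (cyclicOrbit w x₀)) :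
    ∃ E, ∀ s ∈ MulAction.stabilizer G x₀, ∀ {x p p' : X}, p ∈ projSet (cyclicOrbit w x₀) x →
      p' ∈ projSet (cyclicOrbit w x₀) (s • x) →
      dist x₀ p ≤ E ∨ dist x₀ p' ≤ E ∨ |dist x₀ p - dist x₀ p'| ≤ E := by
  choose E hE using exists_dist_proj_comparison hX hw hA
  have hF : {s : G | dist (s • x₀) x₀ ≤ 0}.Finite := finite_setOf_dist_smul_le x₀ x₀ _
  refine ⟨∑ s ∈ hF.toFinset, |E s|, fun s hs x p p' hp hp' => ?_⟩
  have hle : E s ≤ ∑ s ∈ hF.toFinset, |E s| := (le_abs_self _).trans <|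
    Finset.single_le_sum (f := fun s => |E s|) (fun _ _ => abs_nonneg _)
      (hF.mem_toFinset.2 (dist_le_zero.2 hs))
  exact (hE s hp hp').imp hle.trans' (Or.imp hle.trans' hle.trans')

lemma exists_junction (hX : GeodesicSpace X) (hnh : ¬ GromovHyperbolic X)
    (hw : ¬ IsOfFinOrder w) {D R : ℝ} (hA : Bottleneck D (cyclicOrbit w x₀))
    (hR : ∀ y : X, ∃ g : G, dist y (g • x₀) ≤ R) : ∃ (e : G) (K : ℝ), 0 ≤ K ∧
      Junction K (cyclicOrbit w x₀) (e • cyclicOrbit w x₀) x₀ (e • x₀) := by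
  obtain ⟨g, hg⟩ := exists_not_commensurates hX hnh hw hA hR
  obtain ⟨K, hK₀, hK⟩ := exists_junction_of_not_commensurates hX hw hA
  obtain ⟨i, j, hJ⟩ := hK hg
  refine ⟨w ^ (-i) * g * w ^ j, K, hK₀, ?_⟩
  have := hJ.smul (w ^ (-i))
  rwa [zpow_smul_cyclicOrbit, zpow_neg, inv_smul_smul, ← zpow_neg, ← zpow_smul_cyclicOrbit w x₀ j,
    smul_smul, smul_smul, zpow_smul_cyclicOrbit, smul_smul, smul_smul] at this

end Commensurating

/-! ### Quasi-geodesics -/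

section QuasiGeodesics

variable {X : Type*} [MetricSpace X] {N : ℝ → ℝ} {Q D S T a b s t : ℝ} {I J : Set ℝ}
  {α c γ σ lam : ℝ → X} {x y z : X}

lemma exists_continuousOn_concat {f g : ℝ → X} {a b c : ℝ} (hf : ContinuousOn f (Icc a b))
    (hg : ContinuousOn g (Icc b c)) (hab : a ≤ b) (hbc : b ≤ c) (hfg : f b = g b) :
    ∃ k : ℝ → X, ContinuousOn k (Icc a c) ∧ EqOn k f (Icc a b) ∧ EqOn k g (Icc b c) := by
  have hkf : EqOn (fun t => if t ≤ b then f t else g t) f (Icc a b) := fun t ht => if_pos ht.2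
  have hkg : EqOn (fun t => if t ≤ b then f t else g t) g (Icc b c) := fun t ht => by
    rcases ht.1.eq_or_lt with rfl | h
    exacts [(if_pos le_rfl).trans hfg, if_neg h.not_ge]
  refine ⟨_, ?_, hkf, hkg⟩
  rw [← Icc_union_Icc_eq_Icc hab hbc]
  exact (hf.congr hkf).union_of_isClosed (hg.congr hkg) isClosed_Icc isClosed_Icc

lemma qGeoOn_of_biLipschitz (hQ : 1 ≤ Q)
    (h : ∀ s ∈ I, ∀ t ∈ I, s ≤ t → dist (γ s) (γ t) ≤ t - s ∧ t - s ≤ Q * dist (γ s) (γ t)) :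
    QGeoOn Q I γ := by
  have habs : ∀ s ∈ I, ∀ t ∈ I,
      dist (γ s) (γ t) ≤ |t - s| ∧ |t - s| ≤ Q * dist (γ s) (γ t) := fun s hs t ht => by
    rcases le_total s t with hst | hst
    · rw [abs_of_nonneg (sub_nonneg.2 hst)]
      exact h s hs t ht hst
    · rw [abs_sub_comm, abs_of_nonneg (sub_nonneg.2 hst), dist_comm]
      exact h t ht s hs hst
  refine ⟨LipschitzOnWith.continuousOn (K := 1) <| LipschitzOnWith.of_dist_le_mul
    fun s hs t ht => ?_, fun s hs t ht => ⟨?_, ?_⟩⟩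
  · rw [NNReal.coe_one, one_mul, Real.dist_eq, abs_sub_comm]
    exact (habs s hs t ht).1
  · have := (div_le_iff₀' (by linarith)).2 (habs s hs t ht).2
    linarith
  · nlinarith [(habs s hs t ht).1, abs_nonneg (t - s)]

lemma GeodesicOn.qGeoOn (h : GeodesicOn I γ) : QGeoOn 1 I γ :=
  qGeoOn_of_biLipschitz le_rfl fun s hs t ht hst => by
    rw [h s hs t ht, abs_of_nonneg (sub_nonneg.2 hst), one_mul]
    exact ⟨le_rfl, le_rfl⟩

lemma QGeoOn.reverse (h : QGeoOn Q (Icc a b) c) :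
    QGeoOn Q (Icc (-b) (-a)) fun t => c (-t) := by
  have hmaps : MapsTo (fun t : ℝ => -t) (Icc (-b) (-a)) (Icc a b) := fun t ht =>
    ⟨le_neg_of_le_neg ht.2, neg_le_of_neg_le ht.1⟩
  refine ⟨h.1.comp continuous_neg.continuousOn hmaps, fun s hs t ht => ?_⟩
  have := h.2 (-s) (hmaps hs) (-t) (hmaps ht)
  rwa [neg_sub_neg, abs_sub_comm] at this

lemma QGeoOn.of_reparam {π : ℝ → ℝ} (hc : QGeoOn Q I c) (hQ : 1 ≤ Q) (hlam : ContinuousOn lam J)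
    (hπ : MapsTo π J I) (hlip : ∀ s t, |π t - π s| ≤ |t - s|) (hclose : ∀ t ∈ J, |t - π t| ≤ D)
    (hnear : ∀ t ∈ J, dist (lam t) (c (π t)) ≤ D) : QGeoOn (Q + 4 * D) J lam := by
  refine ⟨hlam, fun s hs t ht => ?_⟩
  have hD : 0 ≤ D := (abs_nonneg _).trans (hclose s hs)
  obtain ⟨hlower, hupper⟩ := hc.2 _ (hπ hs) _ (hπ ht)
  have hst : |t - s| ≤ |π t - π s| + 2 * D := by
    linarith [abs_sub_le t (π t) s, abs_sub_le (π t) (π s) s, abs_sub_comm (π s) s, hclose s hs,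
      hclose t ht]
  constructor
  · have hdiv : |t - s| / (Q + 4 * D) ≤ |π t - π s| / Q + 2 * D := calc
      |t - s| / (Q + 4 * D) ≤ |t - s| / Q := by gcongr; linarith
      _ ≤ (|π t - π s| + 2 * D) / Q := by gcongr
      _ ≤ |π t - π s| / Q + 2 * D := by
        rw [add_div]
        gcongr
        exact div_le_self (by positivity) hQ
    linarith [dist_triangle4 (c (π s)) (lam s) (lam t) (c (π t)), dist_comm (c (π s)) (lam s),
      hnear s hs, hnear t ht]
  · have hmul : Q * |π t - π s| ≤ (Q + 4 * D) * |t - s| :=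
      mul_le_mul (by linarith) (hlip s t) (abs_nonneg _) (by linarith)
    linarith [dist_triangle4 (lam s) (c (π s)) (c (π t)) (lam t), dist_comm (lam t) (c (π t)),
      hnear s hs, hnear t ht]

lemma QGeoOn.exists_extension (hX : GeodesicSpace X) (hQ : 1 ≤ Q) (hc : QGeoOn Q (Icc a b) c)
    (hab : a ≤ b) (hy : dist y (c a) ≤ D) (hz : dist z (c b) ≤ D) :
    ∃ (lam : ℝ → X) (a' b' : ℝ), Icc a b ⊆ Icc a' b' ∧ QGeoOn (Q + 4 * D) (Icc a' b') lam ∧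
      lam a' = y ∧ lam b' = z ∧ EqOn lam c (Icc a b) ∧
      ∀ t ∈ Icc a' b', ∃ s ∈ Icc a b, dist (lam t) (c s) ≤ D := by
  obtain ⟨σ, l, hσ⟩ := hX y (c a)
  obtain ⟨τ, m, hτ⟩ := hX (c b) z
  have hl := hσ.1
  have hm := hτ.1
  have hlD : l ≤ D := hσ.dist_eq ▸ hy
  have hmD : m ≤ D := by rwa [← hτ.dist_eq, dist_comm]
  have hσmaps : MapsTo (fun t => t - a + l) (Icc (a - l) a) (Icc 0 l) := fun t ht =>
    ⟨by linarith [ht.1], by linarith [ht.2]⟩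
  have hτmaps : MapsTo (fun t => t - b) (Icc b (b + m)) (Icc 0 m) := fun t ht =>
    ⟨by linarith [ht.1], by linarith [ht.2]⟩
  obtain ⟨f, hf, hfσ, hfc⟩ := exists_continuousOn_concat
    (hσ.2.2.2.continuousOn.comp (by fun_prop) hσmaps) hc.1 (by linarith) hab
    (by simpa using hσ.2.2.1)
  obtain ⟨lam, hlam, hlamf, hlamτ⟩ := exists_continuousOn_concat hf
    (hτ.2.2.2.continuousOn.comp (by fun_prop) hτmaps) (by linarith) (le_add_of_nonneg_right hm)
    ((hfc ⟨hab, le_rfl⟩).trans (by simpa using hτ.2.1.symm))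
  have hlamc : EqOn lam c (Icc a b) := fun t ht =>
    (hlamf ⟨by linarith [ht.1], ht.2⟩).trans (hfc ht)
  have hproj : ∀ t ∈ Icc (a - l) (b + m), |t - projIcc a b hab t| ≤ D ∧
      dist (lam t) (c (projIcc a b hab t)) ≤ D := fun t ht => by
    rcases le_total t a with hta | hat
    · have hlamσ : lam t = σ (t - a + l) := (hlamf ⟨ht.1, hta.trans hab⟩).trans (hfσ ⟨ht.1, hta⟩)
      have hdist : dist (σ (t - a + l)) (c a) = l - (t - a + l) :=
        hσ.dist_right (hσmaps ⟨ht.1, hta⟩)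
      rw [projIcc_of_le_left hab hta, hlamσ, hdist, abs_le]
      exact ⟨⟨by linarith [ht.1], by linarith⟩, by linarith [ht.1]⟩
    rcases le_total t b with htb | hbt
    · rw [projIcc_of_mem hab ⟨hat, htb⟩, hlamc ⟨hat, htb⟩, sub_self, abs_zero, dist_self]
      exact ⟨by linarith, by linarith⟩
    · have hlamτt : lam t = τ (t - b) := hlamτ ⟨hbt, ht.2⟩
      have hdist : dist (c b) (τ (t - b)) = t - b := hτ.dist_left (hτmaps ⟨hbt, ht.2⟩)
      rw [projIcc_of_right_le hab hbt, hlamτt, dist_comm, hdist, abs_le]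
      exact ⟨⟨by linarith, by linarith [ht.2]⟩, by linarith [ht.2]⟩
  refine ⟨lam, a - l, b + m, Icc_subset_Icc (by linarith) (by linarith),
    hc.of_reparam hQ hlam (fun t _ => (projIcc a b hab t).2)
      (fun s t => abs_projIcc_sub_projIcc hab) (fun t ht => (hproj t ht).1)
      fun t ht => (hproj t ht).2, ?_, ?_, hlamc,
    fun t ht => ⟨_, (projIcc a b hab t).2, (hproj t ht).2⟩⟩
  · rw [hlamf ⟨le_rfl, by linarith⟩, hfσ ⟨le_rfl, by linarith⟩]
    simpa using hσ.2.1
  · rw [hlamτ ⟨by linarith, le_rfl⟩]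
    simpa using hτ.2.2.1

lemma dist_add_dist_le_of_mem_projSet {A : Set X} {p q r : X} (hq : q ∈ projSet A r) (hp : p ∈ A) :
    dist p q + dist q r ≤ 3 * dist p r := by
  linarith [hq.2 p hp, dist_comm r q, dist_comm r p, dist_triangle p r q]

lemma exists_qGeoOn_concat_nearest {l s₀ : ℝ} (hγ : IsGeodesicSegment γ T x y)
    (hs₀ : s₀ ∈ Icc 0 T) (hproj : γ s₀ ∈ projSet (γ '' Icc 0 T) z)
    (hσ : IsGeodesicSegment σ l (γ s₀) z) :
    ∃ k, QGeoOn 3 (Icc 0 (s₀ + l)) k ∧ EqOn k γ (Icc 0 s₀) ∧ k (s₀ + l) = z := by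
  have hl := hσ.1
  have hγmaps : Icc 0 s₀ ⊆ Icc 0 T := Icc_subset_Icc_right hs₀.2
  have hσmaps : MapsTo (fun t => t - s₀) (Icc s₀ (s₀ + l)) (Icc 0 l) := fun t ht =>
    ⟨by linarith [ht.1], by linarith [ht.2]⟩
  obtain ⟨k, -, hkγ, hkσ⟩ := exists_continuousOn_concat
    (hγ.2.2.2.mono hγmaps).continuousOn (hσ.2.2.2.continuousOn.comp (by fun_prop) hσmaps)
    hs₀.1 (le_add_of_nonneg_right hl) (by simpa using hσ.2.1.symm)
  refine ⟨k, qGeoOn_of_biLipschitz (by norm_num) fun s hs t ht hst => ?_, hkγ,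
    (hkσ ⟨le_add_of_nonneg_right hl, le_rfl⟩).trans (by simpa using hσ.2.2.1)⟩
  rcases le_total t s₀ with hts | hst₀
  · rw [hkγ ⟨hs.1, hst.trans hts⟩, hkγ ⟨ht.1, hts⟩, hγ.2.2.2 s (hγmaps ⟨hs.1, hst.trans hts⟩) t
      (hγmaps ⟨ht.1, hts⟩), abs_of_nonneg (by linarith)]
    constructor <;> linarith
  have htl := hσmaps ⟨hst₀, ht.2⟩
  rw [hkσ ⟨hst₀, ht.2⟩, Function.comp_apply]
  rcases le_total s s₀ with hss | hs₀s
  · have hsT := hγmaps ⟨hs.1, hss⟩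
    have hprojσ : γ s₀ ∈ projSet (γ '' Icc 0 T) (σ (t - s₀)) :=
      mem_projSet_of_dist_add_dist hproj (by
        linarith [hσ.dist_add_dist htl, dist_comm z (σ (t - s₀)), dist_comm z (γ s₀),
          dist_comm (γ s₀) (σ (t - s₀))])
    have hsplit : dist (γ s) (γ s₀) + dist (γ s₀) (σ (t - s₀)) = t - s := by
      rw [hγ.2.2.2 s hsT s₀ hs₀, hσ.dist_left htl, abs_of_nonneg (by linarith)]
      ring
    rw [hkγ ⟨hs.1, hss⟩, ← hsplit]
    exact ⟨dist_triangle _ _ _,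
      dist_add_dist_le_of_mem_projSet hprojσ (mem_image_of_mem γ hsT)⟩
  · rw [hkσ ⟨hs₀s, hs.2⟩, Function.comp_apply, hσ.2.2.2 _ (hσmaps ⟨hs₀s, hs.2⟩) _ htl,
      abs_of_nonneg (by linarith)]
    constructor <;> linarith

/-! ### Hyperbolicity from an abundance of Morse geodesics -/

lemma MorseOn.reverse (h : MorseOn N (Icc 0 S) α) : MorseOn N (Icc 0 S) fun t => α (S - t) := by
  intro Q hQ s hs t ht hst lam a b hab hlam ha hb u hu
  obtain ⟨v, hv, hd⟩ := h Q hQ (S - t) ⟨by linarith [ht.2], by linarith [ht.1]⟩ (S - s)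
    ⟨by linarith [hs.2], by linarith [hs.1]⟩ (by linarith) (fun t => lam (-t)) (-b) (-a)
    (by linarith) hlam.reverse (by simpa using hb) (by simpa using ha) (-u)
    ⟨by linarith [hu.2], by linarith [hu.1]⟩
  exact ⟨S - v, ⟨by linarith [hv.2], by linarith [hv.1]⟩, by simpa using hd⟩

lemma exists_dist_lt_of_path_near {δ : ℝ} (hα : GeodesicOn (Icc s t) α) (hab : a ≤ b)
    (hlam : ContinuousOn lam (Icc a b)) (ha : lam a = α s) (hb : lam b = α t)
    (hnear : ∀ u ∈ Icc a b, ∃ r ∈ Icc s t, dist (lam u) (α r) < δ) {v : ℝ} (hv : v ∈ Icc s t) :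
    ∃ u ∈ Icc a b, dist (lam u) (α v) < 3 * δ := by
  obtain ⟨_, -, hr⟩ := hnear a ⟨le_rfl, hab⟩
  have hδ : 0 < δ := dist_nonneg.trans_lt hr
  rw [← uIcc_of_le hab] at hlam hnear ⊢
  obtain ⟨u, hu, ⟨_, ⟨r, hr, rfl⟩, hur⟩, _, ⟨r', hr', rfl⟩, hur'⟩ :=
    exists_dist_lt_of_mem_uIcc (A := α '' Icc s v) (B := α '' Icc v t) hlam
      (fun u hu => by
        obtain ⟨r, hr, hd⟩ := hnear u hu
        rw [← image_union, Icc_union_Icc_eq_Icc hv.1 hv.2]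
        exact ⟨_, mem_image_of_mem α hr, hd⟩)
      ⟨α s, mem_image_of_mem α (left_mem_Icc.2 hv.1), by rwa [ha, dist_self]⟩
      ⟨α t, mem_image_of_mem α (right_mem_Icc.2 hv.2), by rwa [hb, dist_self]⟩
  have hsplit := hα.dist_add_dist (u := v) (Icc_subset_Icc_right hv.2 hr) hv
    (Icc_subset_Icc_left hv.1 hr') (Icc_subset_uIcc ⟨hr.2, hr'.1⟩)
  refine ⟨u, hu, ?_⟩
  linarith [dist_triangle_left (α r) (α r') (lam u), dist_triangle (lam u) (α r) (α v),
    dist_nonneg (x := α v) (y := α r')]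

/-- Both points lie within `D` of one `N`-Morse geodesic segment. -/
def NearMorseGeodesic (N : ℝ → ℝ) (D : ℝ) (x y : X) : Prop :=
  ∃ (α : ℝ → X) (S : ℝ), GeodesicOn (Icc 0 S) α ∧ MorseOn N (Icc 0 S) α ∧
    ∃ s ∈ Icc 0 S, ∃ t ∈ Icc 0 S, dist (α s) x ≤ D ∧ dist (α t) y ≤ D

lemma NearMorseGeodesic.exists_le (h : NearMorseGeodesic N D x y) :
    ∃ (α : ℝ → X) (S : ℝ), GeodesicOn (Icc 0 S) α ∧ MorseOn N (Icc 0 S) α ∧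
      ∃ s ∈ Icc 0 S, ∃ t ∈ Icc 0 S, s ≤ t ∧ dist (α s) x ≤ D ∧ dist (α t) y ≤ D := by
  obtain ⟨α, S, hα, hM, s, hs, t, ht, hsx, hty⟩ := h
  rcases le_total s t with hst | hts
  · exact ⟨α, S, hα, hM, s, hs, t, ht, hst, hsx, hty⟩
  · have hα' := (IsGeodesicSegment.reverse ⟨hs.1.trans hs.2, rfl, rfl, hα⟩).2.2.2
    exact ⟨_, S, hα', hM.reverse, S - s, ⟨by linarith [hs.2], by linarith [hs.1]⟩, S - t,
      ⟨by linarith [ht.2], by linarith [ht.1]⟩, by linarith, by simpa using hsx,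
      by simpa using hty⟩

lemma NearMorseGeodesic.trans {R : ℝ} {x' y' : X} (h : NearMorseGeodesic N D x y)
    (hx : dist x x' ≤ R) (hy : dist y y' ≤ R) : NearMorseGeodesic N (D + R) x' y' := by
  obtain ⟨α, S, hα, hM, s, hs, t, ht, hsx, hty⟩ := h
  exact ⟨α, S, hα, hM, s, hs, t, ht, (dist_triangle _ x _).trans (add_le_add hsx hx),
    (dist_triangle _ y _).trans (add_le_add hty hy)⟩

-- Both paths extend to quasi-geodesics between two points of the Morse geodesic.
lemma NearMorseGeodesic.exists_dist_le (h : NearMorseGeodesic N D y z) (hX : GeodesicSpace X)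
    (hQ : 1 ≤ Q) (hab : a ≤ b) (hc : QGeoOn Q (Icc a b) c) (hca : c a = y) (hcb : c b = z)
    (hσ : IsGeodesicSegment σ T y z) {u : ℝ} (hu : u ∈ Icc a b) :
    ∃ v ∈ Icc 0 T, dist (c u) (σ v) ≤ N (Q + 4 * D) + 3 * (N (1 + 4 * D) + 1) + D := by
  obtain ⟨α, S, hα, hM, s, hs, t, ht, hst, hsy, htz⟩ := h.exists_le
  have hD : 0 ≤ D := dist_nonneg.trans hsy
  obtain ⟨f, a₁, b₁, hI₁, hf, hfa, hfb, hfc, -⟩ := hc.exists_extension hX hQ hab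
    (hca.symm ▸ hsy) (hcb.symm ▸ htz)
  obtain ⟨k, a₂, b₂, hI₂, hk, hka, hkb, -, hkσ⟩ := hσ.2.2.2.qGeoOn.exists_extension hX le_rfl hσ.1
    (hσ.2.1.symm ▸ hsy) (hσ.2.2.1.symm ▸ htz)
  have hab₁ : a₁ ≤ b₁ := (hI₁ (left_mem_Icc.2 hab)).1.trans (hI₁ (left_mem_Icc.2 hab)).2
  have hab₂ : a₂ ≤ b₂ := (hI₂ (left_mem_Icc.2 hσ.1)).1.trans (hI₂ (left_mem_Icc.2 hσ.1)).2
  obtain ⟨v, hv, hdv⟩ := hM _ (by linarith) s hs t ht hst f a₁ b₁ hab₁ hf hfa hfb u (hI₁ hu)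
  obtain ⟨r, hr, hdr⟩ := exists_dist_lt_of_path_near (δ := N (1 + 4 * D) + 1)
    (hα.mono (Icc_subset_Icc hs.1 ht.2)) hab₂ hk.1 hka hkb (fun u hu => by
      obtain ⟨v, hv, hd⟩ := hM _ (by linarith) s hs t ht hst k a₂ b₂ hab₂ hk hka hkb u hu
      exact ⟨v, hv, hd.trans_lt (lt_add_one _)⟩) hv
  obtain ⟨q, hq, hdq⟩ := hkσ r hr
  rw [hfc hu] at hdv
  refine ⟨q, hq, ?_⟩
  linarith [dist_triangle4 (c u) (α v) (k r) (σ q), dist_comm (α v) (k r)]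

lemma gromovHyperbolic_of_thin_to_nearest {δ : ℝ}
    (h : ∀ {x y z : X} {γ σ : ℝ → X} {T l s₀ s : ℝ}, IsGeodesicSegment γ T x y →
      IsGeodesicSegment σ l x z → s₀ ∈ Icc 0 T → γ s₀ ∈ projSet (γ '' Icc 0 T) z →
      s ∈ Icc 0 s₀ → ∃ v ∈ Icc 0 l, dist (γ s) (σ v) ≤ δ) : GromovHyperbolic X := by
  refine ⟨max δ 0, le_max_right _ _, fun x y z γ₁ γ₂ γ₃ T₁ T₂ T₃ h₁ h₂ h₃ s hs => ?_⟩
  have hγ₁ := h₁.2.2.2.continuousOn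
  obtain ⟨s₀, hs₀, hmin⟩ := isCompact_Icc.exists_isMinOn (nonempty_Icc.2 h₁.1)
    (f := fun u => dist z (γ₁ u)) ((continuous_const.dist continuous_id).comp_continuousOn hγ₁)
  have hproj : γ₁ s₀ ∈ projSet (γ₁ '' Icc 0 T₁) z :=
    ⟨mem_image_of_mem γ₁ hs₀, forall_mem_image.2 fun u hu => hmin hu⟩
  rcases le_total s s₀ with hss | hss
  · obtain ⟨v, hv, hd⟩ := h h₁ h₃.reverse hs₀ hproj ⟨hs.1, hss⟩
    exact ⟨_, Or.inr ⟨T₃ - v, ⟨by linarith [hv.2], by linarith [hv.1]⟩, rfl⟩,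
      hd.trans (le_max_left _ _)⟩
  · have himage : (fun t => γ₁ (T₁ - t)) '' Icc 0 T₁ = γ₁ '' Icc 0 T₁ := by
      rw [← image_image γ₁ (T₁ - ·), image_const_sub_Icc, sub_self, sub_zero]
    obtain ⟨v, hv, hd⟩ := h (s₀ := T₁ - s₀) (s := T₁ - s) h₁.reverse h₂
      ⟨by linarith [hs₀.2], by linarith [hs₀.1]⟩ (by rwa [himage, sub_sub_cancel])
      ⟨by linarith [hs.2], by linarith⟩
    rw [sub_sub_cancel] at hd
    exact ⟨_, Or.inl ⟨v, hv, rfl⟩, hd.trans (le_max_left _ _)⟩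

lemma gromovHyperbolic_of_nearMorseGeodesic (hX : GeodesicSpace X) {R : ℝ}
    (H : ∀ y z : X, R ≤ dist y z → NearMorseGeodesic N D y z) : GromovHyperbolic X := by
  refine gromovHyperbolic_of_thin_to_nearest
    (δ := max (2 * R) (N (3 + 4 * D) + 3 * (N (1 + 4 * D) + 1) + D))
    fun {x y z γ σ T l s₀ s} hγ hσ hs₀ hproj hs => ?_
  rcases le_total R (dist x z) with hxz | hxz
  · obtain ⟨ρ, m, hρ⟩ := hX (γ s₀) z
    obtain ⟨k, hk, hkγ, hkz⟩ := exists_qGeoOn_concat_nearest hγ hs₀ hproj hρ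
    obtain ⟨v, hv, hd⟩ := (H x z hxz).exists_dist_le hX (by norm_num)
      (add_nonneg hs₀.1 hρ.1) hk ((hkγ (left_mem_Icc.2 hs₀.1)).trans hγ.2.1) hkz hσ
      (Icc_subset_Icc_right (le_add_of_nonneg_right hρ.1) hs)
    rw [hkγ hs] at hd
    exact ⟨v, hv, hd.trans (le_max_right _ _)⟩
  · refine ⟨0, ⟨le_rfl, hσ.1⟩, le_max_of_le_left ?_⟩
    have hx := hproj.2 x ⟨0, ⟨le_rfl, hγ.1⟩, hγ.2.1⟩
    rw [hσ.2.1, dist_comm]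
    linarith [hγ.dist_left hs₀, hγ.dist_left ⟨hs.1, hs.2.trans hs₀.2⟩, dist_triangle x z (γ s₀),
      dist_comm x z, hs.2]

end QuasiGeodesics

section Smul

variable {G X : Type*} [Group G] [MetricSpace X] [MulAction G X] [IsIsometricSMul G X]
  {N : ℝ → ℝ} {D : ℝ}

lemma QGeoOn.smul {Q : ℝ} {I : Set ℝ} {γ : ℝ → X} (h : QGeoOn Q I γ) (g : G) :
    QGeoOn Q I fun t => g • γ t :=
  ⟨(isometry_smul X g).continuous.comp_continuousOn h.1, by simpa only [dist_smul] using h.2⟩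

lemma MorseOn.smul {I : Set ℝ} {α : ℝ → X} (h : MorseOn N I α) (g : G) :
    MorseOn N I fun t => g • α t := by
  intro Q hQ s hs t ht hst lam a b hab hlam ha hb u hu
  obtain ⟨v, hv, hd⟩ := h Q hQ s hs t ht hst _ a b hab (hlam.smul g⁻¹) (by rw [ha, inv_smul_smul])
    (by rw [hb, inv_smul_smul]) u hu
  exact ⟨v, hv, by rwa [← dist_inv_smul_left]⟩

lemma NearMorseGeodesic.smul {x y : X} (h : NearMorseGeodesic N D x y) (g : G) :
    NearMorseGeodesic N D (g • x) (g • y) := by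
  obtain ⟨α, S, hα, hM, s, hs, t, ht, hsx, hty⟩ := h
  exact ⟨_, S, hα.smul g, hM.smul g, s, hs, t, ht, by rwa [dist_smul], by rwa [dist_smul]⟩

lemma exists_not_nearMorseGeodesic (hX : GeodesicSpace X) (hnh : ¬ GromovHyperbolic X) {x₀ : X}
    {R : ℝ} (hR : ∀ y : X, ∃ g : G, dist y (g • x₀) ≤ R) (N : ℝ → ℝ) (D r : ℝ) :
    ∃ b : G, r ≤ dist x₀ (b • x₀) ∧ ¬ NearMorseGeodesic N D x₀ (b • x₀) := by
  by_contra! hnear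
  refine hnh (gromovHyperbolic_of_nearMorseGeodesic hX (N := N) (D := D + R) (R := r + 2 * R)
    fun y z hyz => ?_)
  obtain ⟨g, hg⟩ := hR y
  obtain ⟨h, hh⟩ := hR z
  have hdist : dist x₀ ((g⁻¹ * h) • x₀) = dist (g • x₀) (h • x₀) := by
    rw [mul_smul, dist_comm, dist_inv_smul_left, dist_comm]
  have hgh := (hnear (g⁻¹ * h) (by
    linarith [dist_triangle4 y (g • x₀) (h • x₀) z, dist_comm z (h • x₀)])).smul g
  rw [smul_smul, mul_inv_cancel_left] at hgh
  exact hgh.trans (by rwa [dist_comm]) (by rwa [dist_comm])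

end Smul

/-! ### Elements blocking Morse geodesics -/

lemma exists_forall_ne_lt_abs_sub {V : Set ℝ} {f : ℕ → ℝ} {E r : ℝ}
    (hV : ∀ v ∈ V, ∀ v' ∈ V, v ≤ E ∨ v' ≤ E ∨ |v - v'| ≤ E) (hf : ∀ i, r + E < f i)
    (hsep : Pairwise fun i j => 2 * r + E < |f i - f j|) :
    ∃ i₀, ∀ i, i ≠ i₀ → ∀ v ∈ V, r < |v - f i| := by
  have huniq : {i | ∃ v ∈ V, |v - f i| ≤ r}.Subsingleton := by
    rintro i ⟨v, hv, hvi⟩ j ⟨v', hv', hvj⟩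
    by_contra hij
    have hi := abs_le.1 hvi
    have hj := abs_le.1 hvj
    rcases hV v hv v' hv' with h | h | h
    · linarith [hf i]
    · linarith [hf j]
    · linarith [hsep hij, abs_sub_le (f i) v (f j), abs_sub_le v v' (f j), abs_sub_comm v (f i)]
  rcases huniq.eq_empty_or_singleton with h | ⟨i₀, h⟩
  · exact ⟨0, fun i _ v hv => not_le.1 fun hle => (h.subset ⟨v, hv, hle⟩ :)⟩
  · exact ⟨i₀, fun i hi v hv => not_le.1 fun hle => hi (h.subset ⟨v, hv, hle⟩)⟩

section Blockers

variable {G X : Type*} [Group G] [MetricSpace X] [MulAction G X] [IsIsometricSMul G X]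
  {N : ℝ → ℝ} {D K : ℝ} {A A₀ A₁ A₂ A₃ : Set X} {a b a₀ b₀ a₁ b₁ a₂ b₂ x₀ : X} {e w : G}

/-- If `x` projects to `A` away from `b`, then `g • x` projects to `A` near `a`, and geodesics
from `g • x` to points projecting to `A` away from `a` are not `N`-Morse. -/
structure IsMorseBlocker (N : ℝ → ℝ) (A : Set X) (a b : X) (r : ℝ) (g : G) : Prop where
  dist_proj_le : ∀ {x p q : X}, p ∈ projSet A x → r < dist p b → q ∈ projSet A (g • x) →
    dist q a ≤ r
  not_morseOn : ∀ {x y p q : X}, p ∈ projSet A x → r < dist p b → q ∈ projSet A y →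
    r < dist q a → ∀ {α : ℝ → X} {S : ℝ}, IsGeodesicSegment α S (g • x) y →
      ¬ MorseOn N (Icc 0 S) α

lemma JunctionChain.smul (h : JunctionChain D K A₀ A₁ A₂ A₃ a₀ b₀ a₁ b₁ a₂ b₂) (g : G) :
    JunctionChain D K (g • A₀) (g • A₁) (g • A₂) (g • A₃) (g • a₀) (g • b₀) (g • a₁) (g • b₁)
      (g • a₂) (g • b₂) :=
  ⟨h.bottleneck₀.smul g, h.bottleneck₁.smul g, h.bottleneck₂.smul g, h.bottleneck₃.smul g,
    h.junction₀.smul g, h.junction₁.smul g, h.junction₂.smul g, by simpa only [dist_smul] using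
    h.lt_dist₁, by simpa only [dist_smul] using h.lt_dist₂⟩

lemma JunctionChain.isMorseBlocker (hX : GeodesicSpace X) {g : G}
    (h : JunctionChain D K A A₁ A₂ (g • A) a b₀ a₁ b₁ a₂ (g • b))
    (hN : ¬ NearMorseGeodesic N (K + 4 * D) a₁ b₁) :
    IsMorseBlocker N A a b (K + 3 * D) g := by
  have hD := h.bottleneck₀.nonneg
  have hfar {p : X} (hp : K + 3 * D < dist p b) : K + D < dist (g • p) (g • b) := by
    rw [dist_smul]
    linarith
  refine ⟨fun hp hpb hq => ?_, fun hp hpb hq hqa α S hα hM => hN ?_⟩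
  · exact h.symm.projectsNear₃ hX ((smul_mem_projSet_smul g).2 hp) (hfar hpb) hq
  · have hp' := (smul_mem_projSet_smul g).2 hp
    have hle : K + D ≤ K + 3 * D := by linarith
    obtain ⟨s, hs, hsa⟩ := h.symm.exists_near_right hX hp' (hfar hpb) hq (hle.trans_lt hqa) hα
    obtain ⟨t, ht, htb⟩ := h.symm.exists_near_left hX hp' (hfar hpb) hq (hle.trans_lt hqa) hα
    exact ⟨α, S, hα.2.2.2, hM, s, hs, t, ht, hsa, htb⟩

lemma JunctionChain.isMorseBlocker_zpow (hX : GeodesicSpace X) {u v : G}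
    (h : JunctionChain D K (u • cyclicOrbit w x₀) A₁ A₂ (v • cyclicOrbit w x₀)
      (u • x₀) b₀ a₁ b₁ a₂ (v • x₀))
    (hN : ¬ NearMorseGeodesic N (K + 4 * D) a₁ b₁) (n : ℤ) :
    IsMorseBlocker N (cyclicOrbit w x₀) (w ^ n • x₀) (w ^ (-n) • x₀) (K + 3 * D)
      (w ^ n * u⁻¹ * v * w ^ n) := by
  have hleft : (w ^ n * u⁻¹) • u • cyclicOrbit w x₀ = cyclicOrbit w x₀ := by
    rw [smul_smul, inv_mul_cancel_right, zpow_smul_cyclicOrbit]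
  have hright : (w ^ n * u⁻¹) • v • cyclicOrbit w x₀ =
      (w ^ n * u⁻¹ * v * w ^ n) • cyclicOrbit w x₀ := by
    rw [mul_smul (_ * v), zpow_smul_cyclicOrbit, smul_smul]
  have hchain := h.smul (w ^ n * u⁻¹)
  rw [hleft, hright, smul_smul _ u, inv_mul_cancel_right,
    show (w ^ n * u⁻¹) • v • x₀ = (w ^ n * u⁻¹ * v * w ^ n) • w ^ (-n) • x₀ by
      rw [smul_smul, smul_smul, zpow_neg, mul_inv_cancel_right]] at hchain
  refine hchain.isMorseBlocker hX fun hnear => hN ?_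
  simpa only [inv_smul_smul] using hnear.smul (w ^ n * u⁻¹)⁻¹

lemma Junction.smul_zpow
    (h : Junction K (cyclicOrbit w x₀) (e • cyclicOrbit w x₀) x₀ (e • x₀)) (f : G) (m : ℤ) :
    Junction K (f • cyclicOrbit w x₀) ((f * w ^ m * e) • cyclicOrbit w x₀) ((f * w ^ m) • x₀)
      ((f * w ^ m * e) • x₀) := by
  have := h.smul (f * w ^ m)
  rwa [smul_smul, smul_smul, mul_smul f _ (cyclicOrbit w x₀), zpow_smul_cyclicOrbit] at this

lemma Junction.exists_projectsNear_smul (hX : GeodesicSpace X) (hA : Bottleneck D A)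
    (h : Junction K A (e • A) x₀ (e • x₀)) (z : X) : ∃ f : G,
      dist x₀ (f • x₀) ≤ dist x₀ (e • x₀) ∧
        ProjectsNear (f • A) x₀ (K + 3 * D + dist x₀ (e • x₀)) z := by
  rcases h.projectsNear_or hX hA (hA.smul e) z with hz | hz
  · refine ⟨1, by simp, ?_⟩
    rw [one_smul]
    exact hz.mono (by linarith [hA.nonneg, dist_nonneg (x := x₀) (y := e • x₀)])
  · exact ⟨e, le_rfl, hz.trans (dist_comm _ _).le⟩

variable [ProperSpace X] [ProperlyDiscontinuousSMul G X]

lemma exists_junctionChain (hX : GeodesicSpace X) (hnh : ¬ GromovHyperbolic X)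
    (hw : ¬ IsOfFinOrder w) (hA : Bottleneck D (cyclicOrbit w x₀)) {R : ℝ}
    (hR : ∀ y : X, ∃ g : G, dist y (g • x₀) ≤ R) (N : ℝ → ℝ) :
    ∃ (K : ℝ) (u v : G) (A₁ A₂ : Set X) (b₀ a₁ b₁ a₂ : X), 0 ≤ K ∧
      JunctionChain D K (u • cyclicOrbit w x₀) A₁ A₂ (v • cyclicOrbit w x₀)
        (u • x₀) b₀ a₁ b₁ a₂ (v • x₀) ∧ ¬ NearMorseGeodesic N (K + 4 * D) a₁ b₁ := by
  have hD := hA.nonneg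
  obtain ⟨e, K₁, hK₁, he⟩ := exists_junction hX hnh hw hA hR
  set ε := dist x₀ (e • x₀)
  have hε : 0 ≤ ε := dist_nonneg
  set K₂ := K₁ + 3 * D + ε with hK₂
  set K := 2 * K₂ + 3 * D with hK
  obtain ⟨b, hb, hN⟩ := exists_not_nearMorseGeodesic hX hnh hR N (K + 4 * D) (5 * D + 3 * K₂ + 1)
  obtain ⟨f, hf, hfb⟩ := he.exists_projectsNear_smul hX hA (b • x₀)
  obtain ⟨f', hf', hfb'⟩ := he.exists_projectsNear_smul hX hA (b⁻¹ • x₀)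
  have hbridge : Junction K (f • cyclicOrbit w x₀) ((b * f') • cyclicOrbit w x₀) x₀ (b • x₀) := by
    have hfb'' := hfb'.smul b
    rw [smul_inv_smul, smul_smul] at hfb''
    exact .of_bridge hX (hA.smul f) (hA.smul _) hfb hfb'' (by linarith)
  obtain ⟨m, hm⟩ := ((tendsto_dist_zpow_smul hw x₀ x₀).eventually_gt_atTop
    (2 * K + 7 * D + ε)).exists
  have hfar {f : G} (hf : dist x₀ (f • x₀) ≤ ε) :
      2 * K + 7 * D < dist x₀ ((f * w ^ m) • x₀) := by
    have := dist_triangle_right x₀ (w ^ m • x₀) (f⁻¹ • x₀)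
    have := dist_triangle_left (f • x₀) ((f * w ^ m) • x₀) x₀
    rw [mul_smul, dist_smul] at this
    rw [mul_smul]
    linarith
  have hbranch : ∀ f : G, Junction K (f • cyclicOrbit w x₀)
      ((f * w ^ m * e) • cyclicOrbit w x₀) ((f * w ^ m) • x₀) ((f * w ^ m * e) • x₀) :=
    fun f => (he.mono (by linarith [hK₂, hK])).smul_zpow f m
  refine ⟨K, f * w ^ m * e, b * f' * w ^ m * e, _, _, _, _, _, _, by linarith [hK₂, hK],
    ⟨hA.smul _, hA.smul f, hA.smul (b * f'), hA.smul _, (hbranch f).symm, hbridge,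
      hbranch (b * f'), ?_, ?_⟩, hN⟩
  · rw [dist_comm]
    exact hfar hf
  · rw [mul_assoc b, mul_smul b, dist_smul]
    exact hfar hf'

lemma exists_isMorseBlocker (hX : GeodesicSpace X) (hnh : ¬ GromovHyperbolic X)
    (hw : ¬ IsOfFinOrder w) (hA : Bottleneck D (cyclicOrbit w x₀)) {R : ℝ}
    (hR : ∀ y : X, ∃ g : G, dist y (g • x₀) ≤ R) (N : ℝ → ℝ) :
    ∃ r, 0 ≤ r ∧ ∀ n : ℤ, ∃ g : G,
      IsMorseBlocker N (cyclicOrbit w x₀) (w ^ n • x₀) (w ^ (-n) • x₀) r g := by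
  obtain ⟨K, u, v, A₁, A₂, b₀, a₁, b₁, a₂, hK, hchain, hN⟩ :=
    exists_junctionChain hX hnh hw hA hR N
  exact ⟨K + 3 * D, by linarith [hA.nonneg], fun n => ⟨_, hchain.isMorseBlocker_zpow hX hN n⟩⟩

lemma exists_seq_lt_dist_projSet (hX : GeodesicSpace X) (hw : ¬ IsOfFinOrder w)
    (hA : Bottleneck D (cyclicOrbit w x₀)) {r : ℝ} (hr : 0 ≤ r) :
    ∃ μ : ℕ → ℤ, (Pairwise fun i j => 2 * r < dist (w ^ μ i • x₀) (w ^ μ j • x₀)) ∧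
      ∀ z : X, ∃ i₀, ∀ i, i ≠ i₀ → ∀ s ∈ MulAction.stabilizer G x₀,
        ∀ p ∈ projSet (cyclicOrbit w x₀) (s • z), ∀ c : X,
          dist c x₀ = dist (w ^ μ i • x₀) x₀ → r < dist p c := by
  obtain ⟨E, hE⟩ := exists_stabilizer_dist_proj_comparison hX hw hA
  obtain ⟨μ, hμ, hsep⟩ := exists_seq_pairwise_lt_abs_sub (f := fun k : ℤ => dist x₀ (w ^ k • x₀))
    (fun t => ((tendsto_dist_zpow_smul hw x₀ x₀).eventually_gt_atTop t).exists) (2 * r + |E|)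
  refine ⟨μ, fun i j hij => ?_, fun z => ?_⟩
  · have hdist := abs_dist_sub_le (w ^ μ i • x₀) (w ^ μ j • x₀) x₀
    rw [dist_comm _ x₀, dist_comm _ x₀] at hdist
    linarith [hsep hij, abs_nonneg E]
  obtain ⟨i₀, hi₀⟩ := exists_forall_ne_lt_abs_sub (r := r) (E := E)
    (f := fun i => dist x₀ (w ^ μ i • x₀))
    (V := {v | ∃ s ∈ MulAction.stabilizer G x₀, ∃ p ∈ projSet (cyclicOrbit w x₀) (s • z),
      dist x₀ p = v})
    (by
      rintro _ ⟨s, hs, p, hp, rfl⟩ _ ⟨s', hs', p', hp', rfl⟩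
      exact hE (s' * s⁻¹) (mul_mem hs' (inv_mem hs)) hp (by rwa [mul_smul, inv_smul_smul]))
    (fun i => by linarith [hμ i, le_abs_self E])
    (fun i j hij => by linarith [hsep hij, le_abs_self E])
  refine ⟨i₀, fun i hi s hs p hp c hc => ?_⟩
  have hlt := hi₀ i hi _ ⟨s, hs, p, hp, rfl⟩
  rw [dist_comm x₀, dist_comm x₀, ← hc] at hlt
  exact hlt.trans_le (abs_dist_sub_le p c x₀)

theorem exists_blocking_sequence (hX : GeodesicSpace X) (hnh : ¬ GromovHyperbolic X)
    (hw : ¬ IsOfFinOrder w) (hA : Bottleneck D (cyclicOrbit w x₀)) {R : ℝ}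
    (hR : ∀ y : X, ∃ g : G, dist y (g • x₀) ≤ R) (N : ℝ → ℝ) :
    ∃ g : ℕ → G, ∀ z : X, ∃ i₀ : ℕ,
      (∀ i j, i ≠ j → i ≠ i₀ → j ≠ i₀ → ∀ s ∈ MulAction.stabilizer G x₀,
        ∀ s' ∈ MulAction.stabilizer G x₀, ∀ (α : ℝ → X) (S : ℝ),
          IsGeodesicSegment α S (g i • s • z) (g j • s' • z) → ¬ MorseOn N (Icc 0 S) α) ∧
      ∀ i, i ≠ i₀ → ∀ s ∈ MulAction.stabilizer G x₀, ∀ (α : ℝ → X) (S : ℝ),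
        IsGeodesicSegment α S (g i • s • z) z → ¬ MorseOn N (Icc 0 S) α := by
  obtain ⟨r, hr, hblock⟩ := exists_isMorseBlocker hX hnh hw hA hR N
  choose g hg using hblock
  obtain ⟨μ, hsep, hfar⟩ := exists_seq_lt_dist_projSet hX hw hA hr
  refine ⟨g ∘ μ, fun z => ?_⟩
  obtain ⟨i₀, hi₀⟩ := hfar z
  have hneg (n : ℤ) : dist (w ^ (-n) • x₀) x₀ = dist (w ^ n • x₀) x₀ := by
    rw [zpow_neg, dist_inv_smul_left, dist_comm]
  refine ⟨i₀, fun i j hij hi hj s hs s' hs' α S hα => ?_, fun i hi s hs α S hα => ?_⟩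
  · obtain ⟨p, hp⟩ := hA.projSet_nonempty (s • z)
    obtain ⟨p', hp'⟩ := hA.projSet_nonempty (s' • z)
    obtain ⟨q, hq⟩ := hA.projSet_nonempty (g (μ j) • s' • z)
    have hqj := (hg (μ j)).dist_proj_le hp' (hi₀ j hj s' hs' p' hp' _ (hneg _)) hq
    refine (hg (μ i)).not_morseOn hp (hi₀ i hi s hs p hp _ (hneg _)) hq ?_ hα
    linarith [hsep hij, dist_triangle_left (w ^ μ i • x₀) (w ^ μ j • x₀) q]
  · obtain ⟨p, hp⟩ := hA.projSet_nonempty (s • z)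
    obtain ⟨q, hq⟩ := hA.projSet_nonempty z
    exact (hg (μ i)).not_morseOn hp (hi₀ i hi s hs p hp _ (hneg _)) hq
      (hi₀ i hi 1 (one_mem _) q (by rwa [one_smul]) _ rfl) hα

end Blockers

lemma transConcat_apply_add {G X : Type*} [Group G] [MulAction G X] {g : G} {η lam : ℝ → X}
    {T t : ℝ} (hη : η T = g • lam 0) (ht : 0 ≤ t) :
    transConcat g η T lam (T + t) = g • lam t := by
  rw [transConcat]
  split_ifs with h
  · obtain rfl : t = 0 := by linarith
    rw [add_zero, hη]
  · rw [add_sub_cancel_left]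

end MorseLTG

open MorseLTG in
theorem stmt16_general {G : Type*} [Group G] {X : Type*} [MetricSpace X] [ProperSpace X]
    [MulAction G X] (hX : GeodesicSpace X) (x₀ : X) (hG : IsGeometricAction G X)
    (hnh : ¬ GromovHyperbolic X)
    (hray : ∃ (γ : ℝ → X) (C : ℝ), GeodesicOn (Set.Ici 0) γ ∧ ContractingSet C (γ '' Set.Ici 0))
    (N : ℝ → ℝ) :
    ∃ (η : ℕ → ℝ → X) (T : ℕ → ℝ),
      (∀ i, ∃ g : G, IsGeodesicSegment (η i) (T i) x₀ (g • x₀)) ∧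
      ∀ (lam : ℝ → X) (Tl : ℝ), (∃ h : G, IsGeodesicSegment lam Tl x₀ (h • x₀)) →
        ∃ i₀ : ℕ,
          (∀ i j : ℕ, i ≠ j → i ≠ i₀ → j ≠ i₀ →
            ∀ g g' : G, η i (T i) = g • x₀ → η j (T j) = g' • x₀ →
            ∀ (α : ℝ → X) (S : ℝ),
              IsGeodesicSegment α S (transConcat g (η i) (T i) lam (T i + Tl))
                (transConcat g' (η j) (T j) lam (T j + Tl)) →
              ¬ MorseOn N (Set.Icc 0 S) α) ∧
          (∀ i : ℕ, i ≠ i₀ →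
            ∀ g : G, η i (T i) = g • x₀ →
            ∀ (α : ℝ → X) (S : ℝ),
              IsGeodesicSegment α S (transConcat g (η i) (T i) lam (T i + Tl)) (lam Tl) →
              ¬ MorseOn N (Set.Icc 0 S) α) := by
  obtain ⟨_, _, K, hK, hcov⟩ := hG
  obtain ⟨R, hR⟩ := exists_dist_smul_le_of_isCompact x₀ hK hcov
  obtain ⟨γ, C, hγ, hC⟩ := hray
  have hbot : Bottleneck (13 * max C 1) (γ '' Set.Ici 0) :=
    (hC.mono (le_max_left C 1)).bottleneck (lt_max_of_lt_right one_pos)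
      (projSet_nonempty_of_isClosed (hγ.isClosed_image isClosed_Ici) (Set.nonempty_Ici.image γ))
  obtain ⟨w, D, hw, hA⟩ := exists_bottleneck_cyclicOrbit hX hR hγ hbot
  obtain ⟨g₀, hg₀⟩ := exists_blocking_sequence hX hnh hw hA hR N
  choose η T hη using fun i => hX x₀ (g₀ i • x₀)
  refine ⟨η, T, fun i => ⟨g₀ i, hη i⟩, fun lam Tl ⟨h, hlam⟩ => ?_⟩
  have hend (i : ℕ) (g : G) (hg : η i (T i) = g • x₀) : ∃ s ∈ MulAction.stabilizer G x₀,
      transConcat g (η i) (T i) lam (T i + Tl) = g₀ i • s • lam Tl := by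
    refine ⟨(g₀ i)⁻¹ * g, ?_, ?_⟩
    · rw [MulAction.mem_stabilizer_iff, mul_smul, ← hg, (hη i).2.2.1, inv_smul_smul]
    · rw [transConcat_apply_add (by rw [hg, hlam.2.1]) hlam.1, smul_smul, mul_inv_cancel_left]
  obtain ⟨i₀, hpair, hself⟩ := hg₀ (lam Tl)
  refine ⟨i₀, fun i j hij hi hj g g' hg hg' α S hα => ?_, fun i hi g hg α S hα => ?_⟩
  · obtain ⟨s, hs, hx⟩ := hend i g hg
    obtain ⟨s', hs', hy⟩ := hend j g' hg'
    exact hpair i j hij hi hj s hs s' hs' α S (hx ▸ hy ▸ hα)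
  · obtain ⟨s, hs, hx⟩ := hend i g hg
    exact hself i hi s hs α S (hx ▸ hα)

open MorseLTG in
theorem stmt16 {G : Type*} [Group G] [Group.FG G] {X : Type*} [MetricSpace X] [ProperSpace X]
    [MulAction G X] (hX : GeodesicSpace X) (x₀ : X) (hG : IsGeometricAction G X)
    (hnh : ¬ GromovHyperbolic X) (hmltg : MLTG X)
    (hray : ∃ (γ : ℝ → X) (C : ℝ), IsGeodesicRay γ x₀ ∧ ContractingSet C (γ '' Set.Ici 0))
    (N : ℝ → ℝ) (hN : IsMorseGauge N) :
    ∃ (η : ℕ → ℝ → X) (T : ℕ → ℝ),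
      (∀ i, ∃ g : G, IsGeodesicSegment (η i) (T i) x₀ (g • x₀)) ∧
      ∀ (lam : ℝ → X) (Tl : ℝ), (∃ h : G, IsGeodesicSegment lam Tl x₀ (h • x₀)) →
        ∃ i₀ i₁ : ℕ,
          (∀ i j : ℕ, i ≠ j → i ∉ ({i₀, i₁} : Set ℕ) → j ∉ ({i₀, i₁} : Set ℕ) →
            ∀ g g' : G, η i (T i) = g • x₀ → η j (T j) = g' • x₀ →
            ∀ (α : ℝ → X) (S : ℝ),
              IsGeodesicSegment α S (transConcat g (η i) (T i) lam (T i + Tl))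
                (transConcat g' (η j) (T j) lam (T j + Tl)) →
              ¬ MorseOn N (Set.Icc 0 S) α) ∧
          (∀ i : ℕ, i ∉ ({i₀, i₁} : Set ℕ) →
            ∀ g : G, η i (T i) = g • x₀ →
            ∀ (α : ℝ → X) (S : ℝ),
              IsGeodesicSegment α S (transConcat g (η i) (T i) lam (T i + Tl)) (lam Tl) →
              ¬ MorseOn N (Set.Icc 0 S) α) := by
  obtain ⟨γ, C, ⟨-, hγ⟩, hC⟩ := hray
  obtain ⟨η, T, hη, h⟩ := stmt16_general hX x₀ hG hnh ⟨γ, C, hγ, hC⟩ N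
  refine ⟨η, T, hη, fun lam Tl hlam => ?_⟩
  obtain ⟨i₀, hpair, hself⟩ := h lam Tl hlam
  exact ⟨i₀, i₀, by simpa using hpair, by simpa using hself⟩
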